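/- arXiv:1711.08479 — 2 statements merged into one kernel-verified Lean document; each statement's English description precedes it below -/
import Mathlib

section
/- Let n ≥ 1 and let f, g : ℝⁿ → ℝ be semialgebraic arc-analytic functions. If the zero locus {x ∈ ℝⁿ : g(x) = 0} is nowhere dense in ℝⁿ and there exists a continuous function F : ℝⁿ → ℝ with F(x) = f(x)/g(x) for all x with g(x) ≠ 0, then F is arc-analytic. -/
/-- A function is *arc-analytic* if it is real-analytic along every real-analytic arc
defined on `(-1, 1)`. -/
def ArcAnalytic {E : Type*} [NormedAddCommGroup E] [NormedSpace ℝ E] (f : E → ℝ) : Prop :=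
  ∀ γ : ℝ → E, AnalyticOnNhd ℝ γ (Set.Ioo (-1) 1) →
    AnalyticOnNhd ℝ (f ∘ γ) (Set.Ioo (-1) 1)

/-- A set `S ⊆ ℝⁿ` is *semialgebraic* if it is a finite union of sets of the form
`{x : p x = 0, q₁ x > 0, …, q_r x > 0}` for real polynomials `p, q₁, …, q_r`. -/
def IsSemialgebraic {n : ℕ} (S : Set (Fin n → ℝ)) : Prop :=
  ∃ (k : ℕ) (p : Fin k → MvPolynomial (Fin n) ℝ) (r : Fin k → ℕ)
    (q : (i : Fin k) → Fin (r i) → MvPolynomial (Fin n) ℝ),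
    S = ⋃ i, {x | MvPolynomial.eval x (p i) = 0 ∧
        ∀ j, 0 < MvPolynomial.eval x (q i j)}

/-- A function `f : ℝⁿ → ℝ` is *semialgebraic* if its graph is a semialgebraic subset
of `ℝⁿ⁺¹`. -/
def IsSemialgebraicFun {n : ℕ} (f : (Fin n → ℝ) → ℝ) : Prop :=
  IsSemialgebraic {v : Fin (n + 1) → ℝ | v (Fin.last n) = f (Fin.init v)}

/-!
Fix a point `c` of an analytic arc `γ`. Choose a direction `v` and put `G (t, s) = F (γ t + s • v)`.
For generic `v` and large `N`, the function `g` is nonzero on the perturbed arc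
`γ t + (t - c) ^ N • v` for `t ≠ c` near `c`, so that `F` is meromorphic and continuous, hence
analytic, along it.

As `F` is algebraic over the polynomials, `s` and `G (t, s)` satisfy a polynomial relation over the
ring of analytic germs in `t`. Dividing it by a power of `s` gives a nonzero polynomial `T` with
`T (G (t, s t)) = O(s t)` for every nonvanishing `s → 0`, and hence `T (G (t, 0)) = 0`. By the
intermediate value theorem, the estimate holds on the whole segment from `G (t, 0)` to
`G (t, s t)`; taking finite differences of `T` on this segment, the `D`-th power of its length, with
`D = deg T`, is `O(s t)` up to the leading coefficient of `T`. For `s t = (t - c) ^ N` this says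
that `F ∘ γ` is approximated to any order by analytic germs.

The analytic germs at `c` form a henselian discrete valuation ring, and over such a ring Newton
approximation shows that an algebraic element which can be approximated to any order belongs to the
ring.
-/

open Polynomial Filter Topology Asymptotics IsLocalRing
open scoped Polynomial.Bivariate nonZeroDivisors

section CommRing

variable {R : Type*} [CommRing R]

theorem dvd_factorial_mul_coeff_of_dvd_eval {p : R[X]} {d : ℕ} (hp : p.natDegree ≤ d) {x : R}
    (h : ∀ k ≤ d, x ∣ p.eval (k : R)) : x ∣ d.factorial * p.coeff d := by
  have hΔ : (fwdDiff 1)^[d] p.eval 0 = d.factorial * p.coeff d := by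
    obtain rfl | hlt := hp.eq_or_lt
    · simp [p.fwdDiff_iter_degree_eq_factorial, mul_comm]
    · simp [fwdDiff_iter_eq_zero_of_degree_lt hlt, coeff_eq_zero_of_natDegree_lt hlt]
  rw [← hΔ, fwdDiff_iter_eq_sum_shift]
  refine Finset.dvd_sum fun k hk => ?_
  simpa using (h k (Finset.mem_range_succ_iff.1 hk)).mul_left _

theorem dvd_factorial_mul_leadingCoeff_mul_pow {p : R[X]} {a h x : R}
    (hx : ∀ k ≤ p.natDegree, x ∣ p.eval (a + k * h)) :
    x ∣ p.natDegree.factorial * (p.leadingCoeff * h ^ p.natDegree) := by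
  have hdeg : ((taylor a p).comp (C h * X)).natDegree ≤ p.natDegree :=
    natDegree_comp_le.trans <| by
      simpa [natDegree_taylor] using
        Nat.mul_le_mul_left p.natDegree ((natDegree_C_mul_le h X).trans natDegree_X_le)
  have key := dvd_factorial_mul_coeff_of_dvd_eval hdeg (x := x) fun k hk => by
    simpa only [eval_comp, taylor_eval, eval_mul, eval_C, eval_X, add_comm, mul_comm] using hx k hk
  rwa [comp_C_mul_X_coeff, coeff_taylor_natDegree] at key

theorem isUnit_add_of_mem_jacobson_bot {u j : R} (hu : IsUnit u)
    (hj : j ∈ Ideal.jacobson (⊥ : Ideal R)) : IsUnit (u + j) := by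
  obtain ⟨v, rfl⟩ := hu
  have h := v.isUnit.mul (Ideal.mem_jacobson_bot.1 hj ↑v⁻¹)
  rwa [show (v : R) * (j * ↑v⁻¹ + 1) = v + j by linear_combination j * v.mul_inv] at h

theorem exists_isUnit_eval_sub_eval_eq_mul {K : R[X]} (hK : IsUnit (K.derivative.eval 0)) {x y : R}
    (hx : x ∈ Ideal.jacobson (⊥ : Ideal R)) (hy : y ∈ Ideal.jacobson (⊥ : Ideal R)) :
    ∃ u, IsUnit u ∧ K.eval x - K.eval y = u * (x - y) := by
  obtain ⟨k, hk⟩ := K.binomExpansion y (x - y)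
  obtain ⟨l, hl⟩ := K.derivative.evalSubFactor y 0
  refine ⟨K.derivative.eval 0 + (l * y + k * (x - y)), isUnit_add_of_mem_jacobson_bot hK <|
    add_mem (Ideal.mul_mem_left _ _ hy) (Ideal.mul_mem_left _ _ (sub_mem hx hy)), ?_⟩
  rw [add_sub_cancel] at hk
  linear_combination hk + (x - y) * hl

theorem exists_eval_add_mul_eq {f : R[X]} {a b : R} (h : f.derivative.eval a ^ 2 * b = f.eval a) :
    ∃ K : R[X], K.eval 0 = b ∧ K.derivative.eval 0 = 1 ∧
      f.comp (C a + C (f.derivative.eval a) * X) = C (f.derivative.eval a ^ 2) * K := by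
  obtain ⟨k, hk⟩ := (f.map C).binomExpansion (C a) (C (f.derivative.eval a) * X)
  refine ⟨C b + X + k * X ^ 2, by simp, by simp, ?_⟩
  rw [comp, eval₂_eq_eval_map, hk, derivative_map, eval_map_apply, eval_map_apply, ← h]
  simp only [C_mul, C_pow]
  ring

end CommRing

section Algebra

variable {A B : Type*} [CommRing A] [CommRing B] [Algebra A B]

theorem dvd_aeval_sub_aeval (p : A[X]) (x y : B) : x - y ∣ aeval x p - aeval y p := by
  simpa only [← eval_map_algebraMap] using sub_dvd_eval_sub x y (p.map (algebraMap A B))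

theorem aevalAeval_eq_eval₂ (x y : B)
    (p : A[X][Y]) : aevalAeval x y p = p.eval₂ (aeval x : A[X] →ₐ[A] B).toRingHom y := by
  have h : (aevalAeval x y).toRingHom = eval₂RingHom (aeval x : A[X] →ₐ[A] B).toRingHom y :=
    Polynomial.ringHom_ext (by simp) (by simp)
  exact RingHom.congr_fun h p

variable (B) in
theorem exists_ne_zero_forall_dvd_aeval_of_aevalAeval_eq_zero {p : A[X][Y]} (hp : p ≠ 0) :
    ∃ q : A[X], q ≠ 0 ∧ ∀ (x : B), ∀ y ∈ B⁰, aevalAeval x y p = 0 → y ∣ aeval x q := by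
  obtain ⟨r, hpr, hr⟩ := p.exists_eq_pow_rootMultiplicity_mul_and_not_dvd hp 0
  rw [C_0, sub_zero] at hpr hr
  refine ⟨r.coeff 0, fun h => hr (X_dvd_iff.2 h), fun x y hy h => ?_⟩
  rw [hpr, map_mul, map_pow, aevalAeval_Y, mul_comm,
    mul_right_mem_nonZeroDivisors_eq_zero_iff (pow_mem hy _)] at h
  have hdvd := map_dvd (aevalAeval x y) (X_dvd_sub_C (p := r))
  rwa [aevalAeval_Y, map_sub, h, zero_sub, dvd_neg, aevalAeval_C] at hdvd

end Algebra

section Henselian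

variable {R : Type*} [CommRing R] [HenselianLocalRing R]

theorem exists_one_add_mul_add_mul_sq_mul_eval_eq_zero {u b : R} (hu : IsUnit u)
    (hb : b ∈ maximalIdeal R) (r : R[X]) :
    ∃ y, 1 + u * y + b * (y ^ 2 * r.eval y) = 0 := by
  have hJ : maximalIdeal R ≤ Ideal.jacobson ⊥ := (jacobson_eq_maximalIdeal ⊥ bot_ne_top).ge
  -- The reverse of `1 + u * X + b * X ^ 2 * r`, which is monic, and whose root `z` near the unit
  -- `-u` gives the solution `y = z⁻¹`.
  set e := r.natDegree
  set q : R[X] := X ^ (e + 2) + (C u * X ^ (e + 1) + C b * r.reverse)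
  have hmonic : q.Monic := by
    refine monic_X_pow_add (degree_le_natDegree.trans_lt (Nat.cast_lt.2 ?_))
    refine (natDegree_add_le _ _).trans_lt (max_lt ?_ ?_)
    · exact (natDegree_C_mul_X_pow_le u _).trans_lt (by simp)
    · exact ((natDegree_C_mul_le b _).trans r.reverse_natDegree_le).trans_lt (by simp [e])
  have hq₀ : q.eval (-u) = b * r.reverse.eval (-u) := by
    simp [q]
    ring
  have hq₁ : q.derivative.eval (-u) = (-u) ^ (e + 1) + b * r.reverse.derivative.eval (-u) := by
    simp [q]
    ring
  obtain ⟨z, hz, hzu⟩ := HenselianLocalRing.is_henselian q hmonic (-u)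
    (hq₀ ▸ Ideal.mul_mem_right _ _ hb)
    (hq₁ ▸ isUnit_add_of_mem_jacobson_bot (hu.neg.pow _) (Ideal.mul_mem_right _ _ (hJ hb)))
  obtain ⟨z, rfl⟩ : IsUnit z := by
    simpa using isUnit_add_of_mem_jacobson_bot hu.neg (hJ hzu)
  have hrev : r.reverse.eval ↑z * ↑z⁻¹ ^ e = r.eval ↑z⁻¹ :=
    let := z⁻¹.invertible
    eval₂_reverse_mul_pow (RingHom.id R) ↑z⁻¹ r
  have hz' : (z : R) ^ (e + 2) + (u * z ^ (e + 1) + b * r.reverse.eval ↑z) = 0 := by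
    simpa [q] using hz
  have hy (i j : ℕ) : (z : R) ^ i * ↑z⁻¹ ^ (i + j) = ↑z⁻¹ ^ j := by
    rw [pow_add, ← mul_assoc, ← mul_pow, z.mul_inv, one_pow, one_mul]
  refine ⟨↑z⁻¹, ?_⟩
  rw [← hrev]
  linear_combination ↑z⁻¹ ^ (e + 2) * hz' - hy (e + 2) 0 - u * hy (e + 1) 1

theorem exists_isRoot_sub_mem_maximalIdeal {f : R[X]} {a₀ : R}
    (h₀ : f.eval a₀ ∈ maximalIdeal R) (h₁ : IsUnit (f.derivative.eval a₀)) :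
    ∃ a, f.IsRoot a ∧ a - a₀ ∈ maximalIdeal R := by
  set b := f.eval a₀ with hb
  obtain ⟨k, hk⟩ := (f.map C).binomExpansion (C a₀) X
  rw [derivative_map, eval_map_apply, eval_map_apply, ← hb, ← eval₂_eq_eval_map, ← comp] at hk
  obtain ⟨y, hy⟩ := exists_one_add_mul_add_mul_sq_mul_eval_eq_zero h₁ h₀ (k.comp (C b * X))
  refine ⟨a₀ + b * y, ?_, ?_⟩
  · have hky : f.eval (a₀ + b * y) =
        b + f.derivative.eval a₀ * (b * y) + k.eval (b * y) * (b * y) ^ 2 := by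
      simpa [eval_comp] using congrArg (eval (b * y)) hk
    rw [eval_comp, eval_mul, eval_C, eval_X] at hy
    rw [IsRoot.def, hky]
    linear_combination b * hy
  · rw [add_sub_cancel_left]
    exact Ideal.mul_mem_right _ _ h₀

end Henselian

section InfinitelyDivisible

variable (A : Type*) {B : Type*} [CommRing A] [CommRing B] [Algebra A B]

/-- The algebraic analogue of flatness of a function: divisibility in `B` by every nonzero element
of `A`. -/
def InfinitelyDivisible (x : B) : Prop :=
  ∀ a : A, a ≠ 0 → algebraMap A B a ∣ x

variable {A}

theorem dvd_aeval_sub_algebraMap_eval {φ x : B} {p : A} (h : x ∣ φ - algebraMap A B p) (Q : A[X]) :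
    x ∣ aeval φ Q - algebraMap A B (Q.eval p) := by
  rw [← aeval_algebraMap_apply_eq_algebraMap_eval]
  exact h.trans (dvd_aeval_sub_aeval ..)

variable [IsDomain A] [Module.IsTorsionFree A B]

theorem algebraMap_mul_left_injective {a : A} (ha : a ≠ 0) :
    Function.Injective (algebraMap A B a * ·) := by
  simpa only [Algebra.smul_def] using smul_right_injective B ha

theorem dvd_of_algebraMap_mul_dvd_mul {a : A} (ha : a ≠ 0) {x y : B}
    (h : algebraMap A B a * x ∣ algebraMap A B a * y) : x ∣ y := by
  obtain ⟨z, hz⟩ := h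
  exact ⟨z, algebraMap_mul_left_injective ha (hz.trans (mul_assoc ..))⟩

theorem InfinitelyDivisible.of_algebraMap_mul {d : A} (hd : d ≠ 0) {x : B}
    (h : InfinitelyDivisible A (algebraMap A B d * x)) : InfinitelyDivisible A x := fun a ha =>
  dvd_of_algebraMap_mul_dvd_mul hd <| by simpa only [map_mul] using h (d * a) (mul_ne_zero hd ha)

theorem InfinitelyDivisible.eq_zero_of_isAlgebraic [IsLocalRing A] [IsReduced B]
    (hA : ¬ IsField A)
    (hJ : (maximalIdeal A).map (algebraMap A B) ≤ Ideal.jacobson ⊥)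
    {x : B} (hx : InfinitelyDivisible A x) (halg : IsAlgebraic A x) : x = 0 := by
  obtain ⟨P, hP, hPx⟩ := halg
  obtain ⟨R, hPR, hR⟩ := exists_eq_pow_rootMultiplicity_mul_and_not_dvd P hP 0
  obtain ⟨ϖ, hϖ0, hϖ⟩ := Ring.exists_not_isUnit_of_not_isField hA
  set r := R.eval 0
  have hr : r ≠ 0 := fun h => hR (dvd_iff_isRoot.2 h)
  obtain ⟨y, hy⟩ := hx (r * ϖ) (mul_ne_zero hr hϖ0)
  obtain ⟨z, hz⟩ := dvd_aeval_sub_algebraMap_eval (x := x) (by rw [map_zero, sub_zero]) R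
  have hu : IsUnit (1 + algebraMap A B ϖ * (y * z)) := isUnit_add_of_mem_jacobson_bot isUnit_one <|
    Ideal.mul_mem_right _ _ (hJ (Ideal.mem_map_of_mem _ hϖ))
  have hRx : aeval x R = algebraMap A B r * (1 + algebraMap A B ϖ * (y * z)) := by
    rw [eq_add_of_sub_eq hz]
    nth_rw 1 [hy]
    rw [map_mul]
    ring
  have hpow : x ^ P.rootMultiplicity 0 = 0 := by
    have h : aeval x P = x ^ P.rootMultiplicity 0 * aeval x R := by
      simpa using congrArg (aeval x) hPR
    apply algebraMap_mul_left_injective hr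
    apply hu.mul_left_injective
    linear_combination hPx - h - x ^ P.rootMultiplicity 0 * hRx
  exact eq_zero_of_pow_eq_zero hpow

section ValuationRing

variable [ValuationRing A]

theorem dvd_of_algebraMap_dvd_algebraMap [Nontrivial B]
    (hJ : (maximalIdeal A).map (algebraMap A B) ≤ Ideal.jacobson ⊥)
    {a b : A} (h : algebraMap A B a ∣ algebraMap A B b) : a ∣ b := by
  obtain hab | ⟨m, rfl⟩ := ValuationRing.dvd_total a b
  · exact hab
  by_cases hb : b = 0
  · simp [hb]
  by_cases hm : IsUnit m
  · exact hm.mul_right_dvd.2 dvd_rfl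
  obtain ⟨z, hz⟩ := h
  have hmz : algebraMap A B m * z = 1 := algebraMap_mul_left_injective hb <| by
    simp only [mul_one, ← mul_assoc, ← map_mul, ← hz]
  have hu := Ideal.mem_jacobson_bot.1 (hJ (Ideal.mem_map_of_mem _ hm)) (-z)
  rw [mul_neg, hmz, neg_add_cancel] at hu
  exact absurd hu not_isUnit_zero

theorem not_infinitelyDivisible_algebraMap [Nontrivial B] (hA : ¬ IsField A)
    (hJ : (maximalIdeal A).map (algebraMap A B) ≤ Ideal.jacobson ⊥)
    {a : A} (ha : a ≠ 0) : ¬ InfinitelyDivisible A (algebraMap A B a) := fun h => by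
  obtain ⟨ϖ, hϖ0, hϖ⟩ := Ring.exists_not_isUnit_of_not_isField hA
  have hdvd : a * ϖ ∣ a * 1 := by
    simpa using dvd_of_algebraMap_dvd_algebraMap hJ (h _ (mul_ne_zero ha hϖ0))
  exact hϖ (isUnit_of_dvd_one ((mul_dvd_mul_iff_left ha).1 hdvd))

theorem exists_infinitelyDivisible_not_infinitelyDivisible_derivative [Nontrivial B] [CharZero A]
    (hA : ¬ IsField A)
    (hJ : (maximalIdeal A).map (algebraMap A B) ≤ Ideal.jacobson ⊥) {φ : B}
    {P : A[X]} (hP : P ≠ 0) (hPφ : InfinitelyDivisible A (aeval φ P)) :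
    ∃ Q : A[X], InfinitelyDivisible A (aeval φ Q) ∧
      ¬ InfinitelyDivisible A (aeval φ (derivative Q)) := by
  induction hd : P.natDegree using Nat.strong_induction_on generalizing P with
  | _ d ih =>
    subst hd
    by_cases h : InfinitelyDivisible A (aeval φ (derivative P))
    · have hdeg : P.natDegree ≠ 0 := fun h0 => by
        rw [eq_C_of_natDegree_eq_zero h0, aeval_C] at hPφ
        refine not_infinitelyDivisible_algebraMap hA hJ (fun hc => hP ?_) hPφ
        rw [eq_C_of_natDegree_eq_zero h0, hc, C_0]
      exact ih _ (natDegree_derivative_lt hdeg) (derivative_eq_zero.not.2 hdeg) h rfl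
    · exact ⟨P, hPφ, h⟩

theorem exists_derivative_eval_sq_mul_dvd_eval [Nontrivial B]
    (hJ : (maximalIdeal A).map (algebraMap A B) ≤ Ideal.jacobson ⊥)
    {φ : B} (happrox : ∀ a : A, a ≠ 0 → ∃ p : A, algebraMap A B a ∣ φ - algebraMap A B p)
    {Q : A[X]} (hQ : InfinitelyDivisible A (aeval φ Q))
    (hQ' : ¬ InfinitelyDivisible A (aeval φ (derivative Q))) :
    ∃ p, (derivative Q).eval p ≠ 0 ∧ ∃ m ∈ maximalIdeal A,
      (derivative Q).eval p ^ 2 * m ∣ Q.eval p ∧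
      algebraMap A B ((derivative Q).eval p * m) ∣ φ - algebraMap A B p := by
  obtain ⟨a, ha, hadvd⟩ : ∃ a : A, a ≠ 0 ∧ ¬ algebraMap A B a ∣ aeval φ (derivative Q) := by
    simpa [InfinitelyDivisible] using hQ'
  obtain ⟨p, hp⟩ := happrox (a ^ 2) (pow_ne_zero 2 ha)
  have hpa : algebraMap A B a ∣ φ - algebraMap A B p :=
    ((algebraMap A B).map_dvd (dvd_pow_self a two_ne_zero)).trans hp
  have had : ¬ a ∣ (derivative Q).eval p := fun h => hadvd <|
    (dvd_iff_dvd_of_dvd_sub (dvd_aeval_sub_algebraMap_eval hpa _)).2 ((algebraMap A B).map_dvd h)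
  obtain ⟨m, hm⟩ := (ValuationRing.dvd_total a ((derivative Q).eval p)).resolve_left had
  have hap : a ^ 2 ∣ Q.eval p := dvd_of_algebraMap_dvd_algebraMap hJ <|
    (dvd_iff_dvd_of_dvd_sub (dvd_aeval_sub_algebraMap_eval hp Q)).1 (hQ _ (pow_ne_zero 2 ha))
  refine ⟨p, fun h0 => had (by simp [h0]), m, fun hu => had ?_, Dvd.dvd.trans ⟨m, ?_⟩ hap, hm ▸ hpa⟩
  · rw [hm]
    exact hu.mul_right_dvd.2 dvd_rfl
  · rw [hm]
    ring

theorem exists_infinitelyDivisible_sub_of_approx [HenselianLocalRing A] [Nontrivial B]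
    (hJ : (maximalIdeal A).map (algebraMap A B) ≤ Ideal.jacobson ⊥)
    {φ : B} (happrox : ∀ a : A, a ≠ 0 → ∃ p : A, algebraMap A B a ∣ φ - algebraMap A B p)
    {Q : A[X]} (hQ : InfinitelyDivisible A (aeval φ Q))
    (hQ' : ¬ InfinitelyDivisible A (aeval φ (derivative Q))) :
    ∃ ψ : A, InfinitelyDivisible A (φ - algebraMap A B ψ) := by
  obtain ⟨p, hd0, m, hm, ⟨b, hb⟩, ⟨y, hy⟩⟩ :=
    exists_derivative_eval_sq_mul_dvd_eval hJ happrox hQ hQ'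
  -- Substituting `p + Q'(p) * X` into `Q` gives `Q'(p) ^ 2 * K`, where `0` is a simple root of `K`
  -- modulo the maximal ideal. Both `η` and the root `ζ` of `K` near `0` are small, so `K(η)` is
  -- `η - ζ` up to a unit.
  obtain ⟨K, hK0, hK1, hK⟩ := exists_eval_add_mul_eq (b := m * b) (by rw [hb, mul_assoc])
  obtain ⟨ζ, hKζ, hζ⟩ := exists_isRoot_sub_mem_maximalIdeal (hK0 ▸ Ideal.mul_mem_right b _ hm)
    (hK1 ▸ isUnit_one)
  rw [sub_zero] at hζ
  set d := (derivative Q).eval p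
  set η : B := algebraMap A B m * y
  have hφ : φ = algebraMap A B p + algebraMap A B d * η := by
    rw [eq_add_of_sub_eq' hy, map_mul, mul_assoc]
  have hQK : aeval φ Q = algebraMap A B (d ^ 2) * aeval η K := by
    simpa [aeval_comp, ← hφ] using congrArg (aeval η) hK
  have hK1' : IsUnit ((K.map (algebraMap A B)).derivative.eval 0) := by
    rw [derivative_map, ← map_zero (algebraMap A B), eval_map_apply, hK1, map_one]
    exact isUnit_one
  obtain ⟨u, hu, hsub⟩ := exists_isUnit_eval_sub_eval_eq_mul hK1'
    (Ideal.mul_mem_right y _ (hJ (Ideal.mem_map_of_mem _ hm))) (hJ (Ideal.mem_map_of_mem _ hζ))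
  rw [eval_map_apply, hKζ.eq_zero, map_zero, sub_zero, eval_map_algebraMap] at hsub
  refine ⟨p + d * ζ, fun a ha => ?_⟩
  have hηζ : InfinitelyDivisible A (u * (η - algebraMap A B ζ)) :=
    .of_algebraMap_mul (pow_ne_zero 2 hd0) <| by rwa [← hsub, ← hQK]
  have hφψ : φ - algebraMap A B (p + d * ζ) = algebraMap A B d * (η - algebraMap A B ζ) := by
    rw [hφ, map_add, map_mul]
    ring
  rw [hφψ]
  exact ((hu.dvd_mul_left).1 (hηζ a ha)).mul_left _

theorem mem_range_algebraMap_of_isAlgebraic_of_approx [HenselianLocalRing A] [Nontrivial B]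
    [IsReduced B] [CharZero A] (hA : ¬ IsField A)
    (hJ : (maximalIdeal A).map (algebraMap A B) ≤ Ideal.jacobson ⊥)
    {φ : B} (halg : IsAlgebraic A φ)
    (happrox : ∀ a : A, a ≠ 0 → ∃ p : A, algebraMap A B a ∣ φ - algebraMap A B p) :
    φ ∈ (algebraMap A B).range := by
  obtain ⟨P, hP, hPφ⟩ := halg
  obtain ⟨Q, hQ, hQ'⟩ := exists_infinitelyDivisible_not_infinitelyDivisible_derivative hA hJ hP
    (φ := φ) fun a _ => hPφ ▸ dvd_zero _
  obtain ⟨ψ, hψ⟩ := exists_infinitelyDivisible_sub_of_approx hJ happrox hQ hQ'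
  exact ⟨ψ, (sub_eq_zero.1 (hψ.eq_zero_of_isAlgebraic hA hJ
    (IsAlgebraic.sub ⟨P, hP, hPφ⟩ (isAlgebraic_algebraMap ψ)))).symm⟩

end ValuationRing

end InfinitelyDivisible

/-! ### Germs of bounded functions and of analytic functions -/

section BoundedGerms

variable {α : Type*}

/-- The ring of real functions which are bounded along the filter `l`. -/
def boundedFunctions (l : Filter α) : Subring (α → ℝ) where
  carrier := {f | f =O[l] (fun _ => 1 : α → ℝ)}
  mul_mem' hf hg := (IsBigO.mul hf hg).congr_right fun _ => mul_one 1
  one_mem' := isBigO_refl _ _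
  add_mem' := IsBigO.add
  zero_mem' := isBigO_zero _ _
  neg_mem' := IsBigO.neg_left

/-- The ring of germs along `l` of bounded real functions. -/
abbrev BoundedGerm (l : Filter α) : Subring (Germ l ℝ) :=
  (boundedFunctions l).map (Germ.coeRingHom l)

/-- The germ of a bounded function. -/
def BoundedGerm.mk (l : Filter α) : boundedFunctions l →+* BoundedGerm l :=
  (Germ.coeRingHom l).restrict _ _ fun _ => Set.mem_image_of_mem _

namespace BoundedGerm

variable {l : Filter α}

theorem mk_surjective : Function.Surjective (mk l) := by
  rintro ⟨_, f, hf, rfl⟩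
  exact ⟨⟨f, hf⟩, rfl⟩

theorem mk_eq_mk {f g : boundedFunctions l} : mk l f = mk l g ↔ (f : α → ℝ) =ᶠ[l] g :=
  Subtype.ext_iff.trans Germ.coe_eq

theorem mk_eq_zero {f : boundedFunctions l} :
    mk l f = 0 ↔ ∀ᶠ t in l, (f : α → ℝ) t = 0 := by
  rw [← map_zero (mk l), mk_eq_mk]
  rfl

theorem mk_mem_nonZeroDivisors {f : boundedFunctions l}
    (hf : ∀ᶠ t in l, (f : α → ℝ) t ≠ 0) : mk l f ∈ (BoundedGerm l)⁰ := by
  refine mem_nonZeroDivisors_iff_left.2 fun x hx => ?_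
  obtain ⟨g, rfl⟩ := mk_surjective x
  rw [← map_mul, mk_eq_zero] at hx
  refine mk_eq_zero.2 ?_
  filter_upwards [hx, hf] with t ht hft
  exact (mul_eq_zero.1 ht).resolve_left hft

theorem mk_dvd_mk {f g : boundedFunctions l} : mk l f ∣ mk l g ↔ (g : α → ℝ) =O[l] (f : α → ℝ) := by
  rw [isBigO_iff_exists_eq_mul]
  constructor
  · rintro ⟨q, hq⟩
    obtain ⟨⟨q, hq1⟩, rfl⟩ := mk_surjective q
    rw [← map_mul, mk_eq_mk] at hq
    exact ⟨q, isBigO_one_iff ℝ |>.1 hq1, by rwa [mul_comm]⟩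
  · rintro ⟨q, hq1, hq⟩
    refine ⟨mk l ⟨q, (isBigO_one_iff ℝ).2 hq1⟩, ?_⟩
    rwa [← map_mul, mk_eq_mk, mul_comm]

theorem dvd_of_pow_dvd_pow {x y : BoundedGerm l} {n : ℕ} (hn : n ≠ 0) (h : x ^ n ∣ y ^ n) :
    x ∣ y := by
  obtain ⟨f, rfl⟩ := mk_surjective x
  obtain ⟨g, rfl⟩ := mk_surjective y
  rw [← map_pow, ← map_pow, mk_dvd_mk] at h
  exact mk_dvd_mk.2 (h.of_pow hn)

instance : IsReduced (BoundedGerm l) where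
  eq_zero x := fun ⟨n, hn⟩ => zero_dvd_iff.1 <|
    dvd_of_pow_dvd_pow n.succ_ne_zero (by rw [pow_succ x, hn, zero_mul]; exact dvd_zero _)

theorem mk_mem_jacobson_bot {f : boundedFunctions l} (hf : Tendsto (f : α → ℝ) l (𝓝 0)) :
    mk l f ∈ Ideal.jacobson (⊥ : Ideal (BoundedGerm l)) := by
  refine Ideal.mem_jacobson_bot.2 fun y => ?_
  obtain ⟨g, rfl⟩ := mk_surjective y
  rw [← map_mul, ← map_one (mk l), ← map_add, isUnit_iff_dvd_one, ← map_one (mk l), mk_dvd_mk]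
  have hfg : Tendsto (fun t => (f : α → ℝ) t * (g : α → ℝ) t + 1) l (𝓝 1) := by
    simpa only [zero_add] using
      (hf.zero_mul_isBoundedUnder_le ((isBigO_one_iff ℝ).1 g.2)).add_const 1
  exact ((isEquivalent_const_iff_tendsto one_ne_zero).2 hfg).isBigO_symm

/-- The germ of a convergent function. -/
def ofTendsto {f : α → ℝ} {a : ℝ} (hf : Tendsto f l (𝓝 a)) : BoundedGerm l :=
  mk l ⟨f, hf.isBigO_one ℝ⟩

theorem ofTendsto_dvd_ofTendsto {f g : α → ℝ} {a b : ℝ}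
    {hf : Tendsto f l (𝓝 a)} {hg : Tendsto g l (𝓝 b)} :
    ofTendsto hf ∣ ofTendsto hg ↔ g =O[l] f :=
  mk_dvd_mk

theorem ofTendsto_dvd_ofTendsto_sub {f g k : α → ℝ} {a b d : ℝ}
    {hf : Tendsto f l (𝓝 a)} {hg : Tendsto g l (𝓝 b)} {hk : Tendsto k l (𝓝 d)} :
    ofTendsto hf ∣ ofTendsto hg - ofTendsto hk ↔ (fun t => g t - k t) =O[l] f := by
  rw [ofTendsto, ofTendsto, ofTendsto, ← map_sub, mk_dvd_mk]
  rfl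

theorem eq_zero_of_forall_ofTendsto_dvd {c : ℝ} {x : BoundedGerm (𝓝[≠] c)}
    (h : ∀ {e : ℝ → ℝ} (he : Tendsto e (𝓝[≠] c) (𝓝 0)), (∀ᶠ t in 𝓝[≠] c, e t ≠ 0) →
      ofTendsto he ∣ x) : x = 0 := by
  obtain ⟨f, rfl⟩ := mk_surjective x
  have hid : Tendsto (fun t => t - c) (𝓝[≠] c) (𝓝 0) :=
    tendsto_sub_nhds_zero_iff.2 nhdsWithin_le_nhds
  have hidf : Tendsto (fun t => (t - c) * (f : ℝ → ℝ) t) (𝓝[≠] c) (𝓝 0) :=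
    hid.zero_mul_isBoundedUnder_le ((isBigO_one_iff ℝ).1 f.2)
  have he0 : ∀ᶠ t in 𝓝[≠] c,
      (if (f : ℝ → ℝ) t = 0 then t - c else (t - c) * (f : ℝ → ℝ) t) ≠ 0 := by
    filter_upwards [self_mem_nhdsWithin] with t ht
    split_ifs with hft
    exacts [sub_ne_zero.2 ht, mul_ne_zero (sub_ne_zero.2 ht) hft]
  -- `f = O((t - c) * f)` forces `f` to vanish near `c`.
  obtain ⟨C, hC⟩ := (mk_dvd_mk.1 (h (hid.if' hidf) he0)).bound
  refine mk_eq_zero.2 ?_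
  filter_upwards [hC, (hid.norm.const_mul C).eventually_lt_const (by simp : C * ‖(0 : ℝ)‖ < 1)]
    with t hCt ht
  by_contra hft
  rw [if_neg hft, norm_mul, ← mul_assoc] at hCt
  exact hCt.not_gt (mul_lt_of_lt_one_left (norm_pos_iff.2 hft) ht)

end BoundedGerm

end BoundedGerms

theorem exists_analyticAt_implicitFunction {𝕜 E : Type*} [RCLike 𝕜] [NormedAddCommGroup E]
    [NormedSpace 𝕜 E] [CompleteSpace E] {K : E × 𝕜 → 𝕜} {c : E} {z d : 𝕜}
    (hK : AnalyticAt 𝕜 K (c, z)) (hd : HasDerivAt (fun y => K (c, y)) d z) (hd0 : d ≠ 0) :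
    ∃ ζ : E → 𝕜, AnalyticAt 𝕜 ζ c ∧ ζ c = z ∧ ∀ᶠ t in 𝓝 c, K (t, ζ t) = K (c, z) := by
  have hinv : (fderiv 𝕜 K (c, z) ∘L .inr 𝕜 E 𝕜).IsInvertible := by
    refine ⟨ContinuousLinearEquiv.unitsEquivAut 𝕜 (Units.mk0 d hd0), ?_⟩
    have hfd : HasFDerivAt (fun y => K (c, y)) (fderiv 𝕜 K (c, z) ∘L .inr 𝕜 E 𝕜) z :=
      HasFDerivAt.comp (f := fun y => (c, y)) z hK.differentiableAt.hasFDerivAt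
        (hasFDerivAt_prodMk_right c z)
    rw [hfd.unique hd.hasFDerivAt]
    ext
    simp
  have hcd : ContDiffAt 𝕜 ⊤ K (c, z) := hK.contDiffAt
  have htop : (⊤ : WithTop ℕ∞) ≠ 0 := WithTop.top_ne_zero
  exact ⟨hcd.implicitFunction htop hinv, (hcd.contDiffAt_implicitFunction htop hinv).analyticAt,
    hcd.implicitFunction_apply_self htop hinv, hcd.eventually_apply_implicitFunction htop hinv⟩

section AnalyticGerms

/-- The ring of real functions which are analytic at `c`. -/
def analyticFunctions (c : ℝ) : Subring (ℝ → ℝ) where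
  carrier := {f | AnalyticAt ℝ f c}
  mul_mem' := AnalyticAt.mul
  one_mem' := analyticAt_const
  add_mem' := AnalyticAt.add
  zero_mem' := analyticAt_const
  neg_mem' := AnalyticAt.neg

/-- The ring of germs at `c` of analytic functions. Germs are taken along the punctured
neighbourhood filter, which loses nothing for analytic functions and makes `t - c` a nonzerodivisor
in the ring `BoundedGerm (𝓝[≠] c)` of all bounded germs. -/
abbrev AnalyticGerm (c : ℝ) : Subring (Germ (𝓝[≠] c) ℝ) :=
  (analyticFunctions c).map (Germ.coeRingHom (𝓝[≠] c))

/-- The germ of an analytic function. -/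
def AnalyticGerm.mk (c : ℝ) : analyticFunctions c →+* AnalyticGerm c :=
  (Germ.coeRingHom (𝓝[≠] c)).restrict _ _ fun _ => Set.mem_image_of_mem _

namespace AnalyticGerm

variable {c : ℝ}

theorem mk_surjective : Function.Surjective (mk c) := by
  rintro ⟨_, f, hf, rfl⟩
  exact ⟨⟨f, hf⟩, rfl⟩

theorem mk_eq_mk {f g : analyticFunctions c} :
    mk c f = mk c g ↔ (f : ℝ → ℝ) =ᶠ[𝓝[≠] c] g :=
  Subtype.ext_iff.trans Germ.coe_eq

theorem mk_eq_zero {f : analyticFunctions c} : mk c f = 0 ↔ ∀ᶠ t in 𝓝[≠] c, (f : ℝ → ℝ) t = 0 := by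
  rw [← map_zero (mk c), mk_eq_mk]
  rfl

theorem eventually_ne_zero {f : analyticFunctions c} (hf : mk c f ≠ 0) :
    ∀ᶠ t in 𝓝[≠] c, (f : ℝ → ℝ) t ≠ 0 :=
  (AnalyticAt.eventually_eq_zero_or_eventually_ne_zero f.2).resolve_left fun h =>
    hf (mk_eq_zero.2 (h.filter_mono nhdsWithin_le_nhds))

/-- The germ of a constant function. -/
def const (c : ℝ) : ℝ →+* AnalyticGerm c :=
  (mk c).comp ((Pi.constRingHom ℝ ℝ).codRestrict _ fun _ => analyticAt_const)

instance : CharZero (AnalyticGerm c) :=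
  charZero_of_injective_ringHom (const c).injective

instance : IsDomain (AnalyticGerm c) :=
  have : NoZeroDivisors (AnalyticGerm c) := ⟨fun {x y} h => by
    obtain ⟨f, rfl⟩ := mk_surjective x
    obtain ⟨g, rfl⟩ := mk_surjective y
    refine or_iff_not_imp_left.2 fun hf => mk_eq_zero.2 ?_
    rw [← map_mul, mk_eq_zero] at h
    filter_upwards [h, eventually_ne_zero hf] with t ht hft
    exact (mul_eq_zero.1 ht).resolve_left hft⟩
  NoZeroDivisors.to_isDomain _

theorem apply_eq_of_mk_eq_mk {f g : analyticFunctions c} (h : mk c f = mk c g) :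
    (f : ℝ → ℝ) c = (g : ℝ → ℝ) c :=
  ((f.2.continuousAt.eventuallyEq_nhds_iff_eventuallyEq_nhdsNE g.2.continuousAt).1
    (mk_eq_mk.1 h)).eq_of_nhds

theorem isUnit_mk {f : analyticFunctions c} : IsUnit (mk c f) ↔ (f : ℝ → ℝ) c ≠ 0 := by
  constructor
  · rintro h h0
    obtain ⟨y, hy⟩ := isUnit_iff_exists_inv.1 h
    obtain ⟨g, rfl⟩ := mk_surjective y
    rw [← map_mul, ← map_one (mk c)] at hy
    simpa [h0] using apply_eq_of_mk_eq_mk hy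
  · intro h
    refine isUnit_iff_exists_inv.2 ⟨mk c ⟨(f : ℝ → ℝ)⁻¹, f.2.inv h⟩, ?_⟩
    rw [← map_mul, ← map_one (mk c), mk_eq_mk]
    filter_upwards [(f.2.continuousAt.eventually_ne h).filter_mono nhdsWithin_le_nhds] with t ht
    exact mul_inv_cancel₀ ht

/-- The germ of `t ↦ t - c`. -/
def uniformizer (c : ℝ) : AnalyticGerm c :=
  mk c ⟨fun t => t - c, analyticAt_id.sub analyticAt_const⟩

theorem exists_associated_uniformizer_pow {x : AnalyticGerm c} (hx : x ≠ 0) :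
    ∃ n : ℕ, Associated (uniformizer c ^ n) x := by
  obtain ⟨f, rfl⟩ := mk_surjective x
  obtain ⟨n, g, hg, hg0, hfg⟩ := f.2.exists_eventuallyEq_pow_smul_nonzero_iff.2 <| by
    refine fun h => hx (mk_eq_zero.2 (h.filter_mono nhdsWithin_le_nhds))
  refine ⟨n, (isUnit_mk (f := ⟨g, hg⟩).2 hg0).unit, ?_⟩
  rw [IsUnit.unit_spec, uniformizer, ← map_pow, ← map_mul, mk_eq_mk]
  exact EventuallyEq.symm (hfg.filter_mono nhdsWithin_le_nhds)

theorem uniformizer_dvd_mk {f : analyticFunctions c} :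
    uniformizer c ∣ mk c f ↔ (f : ℝ → ℝ) c = 0 := by
  constructor
  · rintro ⟨y, hy⟩
    obtain ⟨g, rfl⟩ := mk_surjective y
    rw [uniformizer, ← map_mul] at hy
    simpa using apply_eq_of_mk_eq_mk hy
  · intro h
    by_cases hf : mk c f = 0
    · simp [hf]
    obtain ⟨n, hn⟩ := exists_associated_uniformizer_pow hf
    refine (dvd_pow_self _ fun hn0 => ?_).trans hn.dvd
    rw [hn0, pow_zero] at hn
    exact isUnit_mk.1 (hn.isUnit isUnit_one) h

theorem prime_uniformizer : Prime (uniformizer c) := by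
  refine ⟨fun h => ?_, fun h => ?_, fun x y h => ?_⟩
  · obtain ⟨t, ht, ht0⟩ := ((mk_eq_zero.1 h).and self_mem_nhdsWithin).exists
    exact ht0 (sub_eq_zero.1 ht)
  · simpa using isUnit_mk.1 h
  · obtain ⟨f, rfl⟩ := mk_surjective x
    obtain ⟨g, rfl⟩ := mk_surjective y
    rw [← map_mul] at h
    rw [uniformizer_dvd_mk] at h
    simpa only [uniformizer_dvd_mk] using mul_eq_zero.1 h

instance : IsDiscreteValuationRing (AnalyticGerm c) :=
  .ofHasUnitMulPowIrreducibleFactorization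
    ⟨uniformizer c, prime_uniformizer.irreducible, exists_associated_uniformizer_pow⟩

theorem mk_mem_maximalIdeal {f : analyticFunctions c} :
    mk c f ∈ maximalIdeal (AnalyticGerm c) ↔ (f : ℝ → ℝ) c = 0 := by
  rw [mem_maximalIdeal, mem_nonunits_iff, isUnit_mk, not_not]

theorem isBigO_one_of_analyticAt {f : ℝ → ℝ} (hf : AnalyticAt ℝ f c) :
    f =O[𝓝[≠] c] (fun _ => 1 : ℝ → ℝ) :=
  (hf.continuousAt.tendsto.isBigO_one ℝ).mono nhdsWithin_le_nhds

theorem le_boundedGerm : AnalyticGerm c ≤ BoundedGerm (𝓝[≠] c) :=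
  (Subring.gc_map_comap _).monotone_l fun _ => isBigO_one_of_analyticAt

instance : Algebra (AnalyticGerm c) (BoundedGerm (𝓝[≠] c)) :=
  (Subring.inclusion le_boundedGerm).toAlgebra

theorem algebraMap_mk (f : analyticFunctions c) :
    algebraMap (AnalyticGerm c) (BoundedGerm (𝓝[≠] c)) (mk c f) =
      BoundedGerm.mk (𝓝[≠] c) ⟨f, isBigO_one_of_analyticAt f.2⟩ :=
  rfl

instance : Module.IsTorsionFree (AnalyticGerm c) (BoundedGerm (𝓝[≠] c)) :=
  have hcancel {x : AnalyticGerm c} {y : BoundedGerm (𝓝[≠] c)} (h : x • y = 0) : x = 0 ∨ y = 0 := by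
    obtain ⟨f, rfl⟩ := mk_surjective x
    rw [Algebra.smul_def, algebraMap_mk] at h
    refine or_iff_not_imp_left.2 fun hf => ?_
    have hmem : BoundedGerm.mk (𝓝[≠] c) ⟨f, isBigO_one_of_analyticAt f.2⟩ ∈
        (BoundedGerm (𝓝[≠] c))⁰ :=
      BoundedGerm.mk_mem_nonZeroDivisors (eventually_ne_zero hf)
    exact mem_nonZeroDivisors_iff_left.1 hmem y h
  .of_smul_eq_zero fun _ _ => hcancel

theorem map_maximalIdeal_le_jacobson_bot :
    (maximalIdeal (AnalyticGerm c)).map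
      (algebraMap (AnalyticGerm c) (BoundedGerm (𝓝[≠] c))) ≤ Ideal.jacobson ⊥ := by
  refine Ideal.map_le_iff_le_comap.2 fun x hx => ?_
  obtain ⟨f, rfl⟩ := mk_surjective x
  rw [mk_mem_maximalIdeal] at hx
  rw [Ideal.mem_comap, algebraMap_mk]
  exact BoundedGerm.mk_mem_jacobson_bot <|
    (hx ▸ f.2.continuousAt.tendsto).mono_left nhdsWithin_le_nhds

/-- Evaluation of functions at a point `t`, which need not be the base point `c`. -/
def evalAt (c t : ℝ) : analyticFunctions c →+* ℝ :=
  (Pi.evalRingHom (fun _ => ℝ) t).comp (analyticFunctions c).subtype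

theorem analyticAt_eval₂_evalAt (p : (analyticFunctions c)[X]) (z : ℝ) :
    AnalyticAt ℝ (fun x : ℝ × ℝ => p.eval₂ (evalAt c x.1) x.2) (c, z) := by
  simp only [eval₂_eq_sum_range]
  exact Finset.analyticAt_fun_sum _ fun i _ =>
    ((p.coeff i).2.comp_of_eq analyticAt_fst rfl).mul (analyticAt_snd.pow i)

instance : HenselianLocalRing (AnalyticGerm c) where
  is_henselian f _ a₀ h₀ h₁ := by
    obtain ⟨p, rfl⟩ := Polynomial.map_surjective (mk c) mk_surjective f
    obtain ⟨α, rfl⟩ := mk_surjective a₀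
    rw [eval_map_apply, mk_mem_maximalIdeal] at h₀
    rw [derivative_map, eval_map_apply, isUnit_mk] at h₁
    have hderiv : HasDerivAt (fun y => p.eval₂ (evalAt c c) y)
        (evalAt c c (p.derivative.eval α)) (evalAt c c α) := by
      simpa only [derivative_map, eval_map, eval₂_at_apply]
        using (p.map (evalAt c c)).hasDerivAt (evalAt c c α)
    obtain ⟨ζ, hζ, hζc, hζp⟩ :=
      exists_analyticAt_implicitFunction (analyticAt_eval₂_evalAt p _) hderiv h₁
    refine ⟨mk c ⟨ζ, hζ⟩, ?_, ?_⟩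
    · rw [IsRoot.def, eval_map_apply, mk_eq_zero]
      filter_upwards [hζp.filter_mono nhdsWithin_le_nhds] with t ht
      exact (eval₂_at_apply (evalAt c t) ⟨ζ, hζ⟩).symm.trans <|
        ht.trans <| (eval₂_at_apply (evalAt c c) α).trans h₀
    · rw [← map_sub, mk_mem_maximalIdeal]
      exact sub_eq_zero.2 hζc

end AnalyticGerm

end AnalyticGerms

theorem exists_mem_uIcc_eq_lineMap {g : ℝ → ℝ} {a b lam : ℝ} (hg : ContinuousOn g (Set.uIcc a b))
    (hab : a ≠ b) (hlam : lam ∈ Set.Ioc 0 1) :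
    ∃ s ∈ Set.uIcc a b, s ≠ a ∧ g s = AffineMap.lineMap (g a) (g b) lam := by
  by_cases h : g a = g b
  · exact ⟨b, Set.right_mem_uIcc, hab.symm, by simp [h]⟩
  · obtain ⟨s, hs, hgs⟩ := intermediate_value_uIcc hg <|
      (segment_eq_uIcc (g a) (g b)) ▸ lineMap_mem_segment ℝ (g a) (g b) ⟨hlam.1.le, hlam.2⟩
    refine ⟨s, hs, ?_, hgs⟩
    rintro rfl
    exact hlam.1.ne' ((AffineMap.lineMap_eq_left_iff.1 hgs.symm).resolve_left h)

/-! ### Germs along graphs -/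

section Graphs

variable {c : ℝ} {G : ℝ × ℝ → ℝ} {s s₁ : ℝ → ℝ}

theorem tendsto_graph (hs : Tendsto s (𝓝[≠] c) (𝓝 0)) :
    Tendsto (fun t => (t, s t)) (𝓝[≠] c) (𝓝 (c, 0)) :=
  (tendsto_id.mono_left nhdsWithin_le_nhds).prodMk_nhds hs

/-- The germ of the restriction `t ↦ G (t, s t)` of `G` to the graph of `s`. -/
def graphGerm (hG : ContinuousAt G (c, 0)) (hs : Tendsto s (𝓝[≠] c) (𝓝 0)) :
    BoundedGerm (𝓝[≠] c) :=
  BoundedGerm.ofTendsto (hG.tendsto.comp (tendsto_graph hs))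

theorem exists_tendsto_isBigO_graph_sub (hG : ∀ᶠ x in 𝓝 (c, 0), ContinuousAt G x) {e : ℝ → ℝ}
    (he : Tendsto e (𝓝[≠] c) (𝓝 0)) (he0 : ∀ᶠ t in 𝓝[≠] c, e t ≠ 0) :
    ∃ s, Tendsto s (𝓝[≠] c) (𝓝 0) ∧ (∀ᶠ t in 𝓝[≠] c, s t ≠ 0) ∧ s =O[𝓝[≠] c] e ∧
      (fun t => G (t, s t) - G (t, 0)) =O[𝓝[≠] c] e := by
  have hex : ∀ᶠ t in 𝓝[≠] c, ∃ y : ℝ, y ≠ 0 ∧ ‖y‖ ≤ ‖e t‖ ∧ ‖G (t, y) - G (t, 0)‖ ≤ ‖e t‖ := by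
    filter_upwards [(tendsto_graph tendsto_const_nhds).eventually hG, he0] with t htG hte
    have hlim : Tendsto (fun y => G (t, y) - G (t, 0)) (𝓝[≠] 0) (𝓝 0) :=
      tendsto_sub_nhds_zero_iff.2 <|
        (htG.comp (Continuous.prodMk_right t).continuousAt).tendsto.mono_left nhdsWithin_le_nhds
    have hid : Tendsto (fun y : ℝ => y) (𝓝[≠] 0) (𝓝 0) := nhdsWithin_le_nhds
    exact ((eventually_mem_nhdsWithin (a := (0 : ℝ)) (s := {0}ᶜ)).and <|
      (hid.norm.eventually_le_const (by simpa)).and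
        (hlim.norm.eventually_le_const (by simpa))).exists
  obtain ⟨s, hs⟩ := hex.choice
  have hse : s =O[𝓝[≠] c] e := .of_bound' (hs.mono fun t ht => ht.2.1)
  exact ⟨s, hse.trans_tendsto he, hs.mono fun t ht => ht.1, hse,
    .of_bound' (hs.mono fun t ht => ht.2.2)⟩

theorem exists_tendsto_isBigO_graph_eq_lineMap (hG : ∀ᶠ x in 𝓝 (c, 0), ContinuousAt G x)
    (hs₁ : Tendsto s₁ (𝓝[≠] c) (𝓝 0)) (hs₁0 : ∀ᶠ t in 𝓝[≠] c, s₁ t ≠ 0) {lam : ℝ}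
    (hlam : lam ∈ Set.Ioc 0 1) :
    ∃ s, Tendsto s (𝓝[≠] c) (𝓝 0) ∧ (∀ᶠ t in 𝓝[≠] c, s t ≠ 0) ∧ s =O[𝓝[≠] c] s₁ ∧
      ∀ᶠ t in 𝓝[≠] c, G (t, s t) = AffineMap.lineMap (G (t, 0)) (G (t, s₁ t)) lam := by
  have hcont : ∀ᶠ t in 𝓝[≠] c, ∀ y ∈ Set.uIcc 0 (s₁ t), ContinuousAt G (t, y) := by
    rw [nhds_prod_eq, eventually_prod_iff] at hG
    obtain ⟨p, hp, q, hq, hpq⟩ := hG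
    filter_upwards [hp.filter_mono nhdsWithin_le_nhds,
      (tendsto_const_nhds.uIcc hs₁).eventually (eventually_smallSets_forall.2 hq)] with t htp htq
    exact fun y hy => hpq htp (htq y hy)
  have hex : ∀ᶠ t in 𝓝[≠] c, ∃ y ∈ Set.uIcc 0 (s₁ t), y ≠ 0 ∧
      G (t, y) = AffineMap.lineMap (G (t, 0)) (G (t, s₁ t)) lam := by
    filter_upwards [hcont, hs₁0] with t ht ht0
    exact exists_mem_uIcc_eq_lineMap (g := fun y => G (t, y)) (fun y hy =>
      ((ht y hy).comp (Continuous.prodMk_right t).continuousAt).continuousWithinAt) ht0.symm hlam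
  obtain ⟨s, hs⟩ := hex.choice
  have hle : s =O[𝓝[≠] c] s₁ := .of_bound' <| hs.mono fun t ht => by
    simpa using Set.abs_sub_left_of_mem_uIcc ht.1
  exact ⟨s, hle.trans_tendsto hs₁, hs.mono fun t ht => ht.2.1, hle, hs.mono fun t ht => ht.2.2⟩

/-- The estimate `T (G (t, s t)) = O(s t)` for every nonvanishing `s → 0`, where `T` has analytic
germs at `c` as coefficients. -/
def VanishesAlongGraphs (hG : ContinuousAt G (c, 0)) (T : (AnalyticGerm c)[X]) : Prop :=
  ∀ ⦃s : ℝ → ℝ⦄ (hs : Tendsto s (𝓝[≠] c) (𝓝 0)), (∀ᶠ t in 𝓝[≠] c, s t ≠ 0) →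
    BoundedGerm.ofTendsto hs ∣ aeval (graphGerm hG hs) T

theorem VanishesAlongGraphs.aeval_eq_zero (hG : ∀ᶠ x in 𝓝 (c, 0), ContinuousAt G x)
    {T : (AnalyticGerm c)[X]} (hT : VanishesAlongGraphs hG.self_of_nhds T) :
    aeval (graphGerm hG.self_of_nhds tendsto_const_nhds) T = 0 := by
  refine BoundedGerm.eq_zero_of_forall_ofTendsto_dvd fun {e} he he0 => ?_
  obtain ⟨s, hs, hs0, hse, hGe⟩ := exists_tendsto_isBigO_graph_sub hG he he0
  have hsT : BoundedGerm.ofTendsto he ∣ aeval (graphGerm hG.self_of_nhds hs) T :=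
    (BoundedGerm.ofTendsto_dvd_ofTendsto.2 hse).trans (hT hs hs0)
  refine (dvd_iff_dvd_of_dvd_sub ?_).1 hsT
  exact (BoundedGerm.ofTendsto_dvd_ofTendsto_sub.2 hGe).trans (dvd_aeval_sub_aeval ..)

theorem VanishesAlongGraphs.dvd_aeval_add_mul (hG : ∀ᶠ x in 𝓝 (c, 0), ContinuousAt G x)
    {T : (AnalyticGerm c)[X]} (hT : VanishesAlongGraphs hG.self_of_nhds T)
    (hs₁ : Tendsto s₁ (𝓝[≠] c) (𝓝 0)) (hs₁0 : ∀ᶠ t in 𝓝[≠] c, s₁ t ≠ 0) {lam : ℝ}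
    (hlam : lam ∈ Set.Icc 0 1) :
    BoundedGerm.ofTendsto hs₁ ∣ aeval (graphGerm hG.self_of_nhds tendsto_const_nhds +
      algebraMap _ _ (AnalyticGerm.const c lam) * (graphGerm hG.self_of_nhds hs₁ -
        graphGerm hG.self_of_nhds tendsto_const_nhds)) T := by
  obtain rfl | hlam0 := hlam.1.eq_or_lt
  · simp [hT.aeval_eq_zero hG]
  obtain ⟨s, hs, hs0, hss₁, hGs⟩ :=
    exists_tendsto_isBigO_graph_eq_lineMap hG hs₁ hs₁0 ⟨hlam0, hlam.2⟩
  have hgraph : graphGerm hG.self_of_nhds hs = graphGerm hG.self_of_nhds tendsto_const_nhds +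
      algebraMap _ _ (AnalyticGerm.const c lam) * (graphGerm hG.self_of_nhds hs₁ -
        graphGerm hG.self_of_nhds tendsto_const_nhds) := by
    have h : (fun t => G (t, s t)) =ᶠ[𝓝[≠] c]
        fun t => G (t, 0) + lam * (G (t, s₁ t) - G (t, 0)) := hGs.mono fun t ht =>
      ht.trans ((AffineMap.lineMap_apply_ring' _ _ _).trans (add_comm _ _))
    exact Subtype.ext (Germ.coe_eq.2 h)
  exact hgraph ▸ (BoundedGerm.ofTendsto_dvd_ofTendsto.2 hss₁).trans (hT hs hs0)

theorem VanishesAlongGraphs.dvd_factorial_mul (hG : ∀ᶠ x in 𝓝 (c, 0), ContinuousAt G x)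
    {T : (AnalyticGerm c)[X]} (hT : VanishesAlongGraphs hG.self_of_nhds T)
    (hs₁ : Tendsto s₁ (𝓝[≠] c) (𝓝 0)) (hs₁0 : ∀ᶠ t in 𝓝[≠] c, s₁ t ≠ 0)
    {δ : BoundedGerm (𝓝[≠] c)}
    (hδ : graphGerm hG.self_of_nhds hs₁ - graphGerm hG.self_of_nhds tendsto_const_nhds =
      T.natDegree * δ) :
    BoundedGerm.ofTendsto hs₁ ∣
      algebraMap _ _ (T.natDegree.factorial * T.leadingCoeff) * δ ^ T.natDegree := by
  set φ := algebraMap (AnalyticGerm c) (BoundedGerm (𝓝[≠] c)) with hφ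
  have hinj : Function.Injective φ := FaithfulSMul.algebraMap_injective _ _
  have key := dvd_factorial_mul_leadingCoeff_mul_pow (p := T.map φ) (h := δ)
    (a := graphGerm hG.self_of_nhds tendsto_const_nhds) (x := BoundedGerm.ofTendsto hs₁) ?_
  · rwa [natDegree_map_eq_of_injective hinj, leadingCoeff_map_of_injective hinj, ← mul_assoc,
      ← map_natCast φ, ← map_mul] at key
  · rw [natDegree_map_eq_of_injective hinj]
    intro k hk
    have hk' : (k / T.natDegree : ℝ) ∈ Set.Icc 0 1 :=
      ⟨by positivity, div_le_one_of_le₀ (by exact_mod_cast hk) (by positivity)⟩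
    have hkδ : φ (AnalyticGerm.const c (k / T.natDegree)) * (T.natDegree * δ) = k * δ := by
      obtain hD | hD := eq_or_ne T.natDegree 0
      · simp [hD, Nat.le_zero.1 (hD ▸ hk)]
      · rw [← mul_assoc, ← map_natCast φ T.natDegree, ← map_natCast (AnalyticGerm.const c),
          ← map_mul, ← map_mul, div_mul_cancel₀ _ (Nat.cast_ne_zero.2 hD), map_natCast, map_natCast]
    have hdvd := hT.dvd_aeval_add_mul hG hs₁ hs₁0 hk'
    rw [hδ, ← hφ, hkδ] at hdvd
    rwa [eval_map_algebraMap]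

theorem tendsto_sub_pow (c : ℝ) {N : ℕ} (hN : N ≠ 0) :
    Tendsto (fun t => (t - c) ^ N) (𝓝[≠] c) (𝓝 0) := by
  have h : Tendsto (fun t => (t - c) ^ N) (𝓝 c) (𝓝 ((c - c) ^ N)) :=
    ((continuous_sub_right c).pow N).tendsto c
  rw [sub_self, zero_pow hN] at h
  exact h.mono_left nhdsWithin_le_nhds

theorem eventually_sub_pow_ne_zero (c : ℝ) (N : ℕ) : ∀ᶠ t in 𝓝[≠] c, (t - c) ^ N ≠ 0 := by
  filter_upwards [self_mem_nhdsWithin] with t ht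
  exact pow_ne_zero N (sub_ne_zero.2 ht)

theorem VanishesAlongGraphs.exists_dvd_graphGerm_sub (hG : ∀ᶠ x in 𝓝 (c, 0), ContinuousAt G x)
    {T : (AnalyticGerm c)[X]} (hT0 : T ≠ 0) (hT : VanishesAlongGraphs hG.self_of_nhds T)
    (han : ∃ᶠ N : ℕ in atTop, AnalyticAt ℝ (fun t => G (t, (t - c) ^ N)) c) {a : AnalyticGerm c}
    (ha : a ≠ 0) :
    ∃ q, algebraMap (AnalyticGerm c) (BoundedGerm (𝓝[≠] c)) a ∣
      graphGerm hG.self_of_nhds tendsto_const_nhds -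
        algebraMap (AnalyticGerm c) (BoundedGerm (𝓝[≠] c)) q := by
  set φ := algebraMap (AnalyticGerm c) (BoundedGerm (𝓝[≠] c))
  set D := T.natDegree
  have hD0 : D ≠ 0 := (natDegree_pos_of_aeval_root hT0 (hT.aeval_eq_zero hG) fun _ =>
    (FaithfulSMul.algebraMap_eq_zero_iff _ _).1).ne'
  have hb : (D.factorial * T.leadingCoeff : AnalyticGerm c) ≠ 0 :=
    mul_ne_zero (Nat.cast_ne_zero.2 D.factorial_ne_zero) (leadingCoeff_ne_zero.2 hT0)
  obtain ⟨m, hm⟩ := AnalyticGerm.exists_associated_uniformizer_pow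
    (mul_ne_zero hb (pow_ne_zero D ha))
  obtain ⟨N, hNan, hmN, hN0⟩ :=
    (han.and_eventually ((eventually_ge_atTop m).and (eventually_ne_atTop 0))).exists
  set s₁ := tendsto_sub_pow c hN0
  have hgraph : graphGerm hG.self_of_nhds s₁ = φ (AnalyticGerm.mk c ⟨_, hNan⟩) := rfl
  have hs₁ : BoundedGerm.ofTendsto s₁ = φ (AnalyticGerm.uniformizer c ^ N) := rfl
  set δ := φ (AnalyticGerm.const c (1 / D)) *
    (graphGerm hG.self_of_nhds s₁ - graphGerm hG.self_of_nhds tendsto_const_nhds) with hδ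
  have hDδ : graphGerm hG.self_of_nhds s₁ - graphGerm hG.self_of_nhds tendsto_const_nhds =
      D * δ := by
    rw [hδ, ← mul_assoc, ← map_natCast φ D, ← map_natCast (AnalyticGerm.const c), ← map_mul,
      ← map_mul, mul_one_div_cancel (Nat.cast_ne_zero.2 hD0), map_one, map_one, one_mul]
  have hdvd : φ (D.factorial * T.leadingCoeff) * φ a ^ D ∣
      φ (D.factorial * T.leadingCoeff) * δ ^ D := by
    rw [← map_pow, ← map_mul]
    exact (map_dvd φ (hm.symm.dvd.trans (pow_dvd_pow _ hmN))).trans <|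
      hs₁ ▸ hT.dvd_factorial_mul hG s₁ (eventually_sub_pow_ne_zero c N) hDδ
  refine ⟨AnalyticGerm.mk c ⟨_, hNan⟩, ?_⟩
  rw [← hgraph, dvd_sub_comm, hDδ]
  exact (BoundedGerm.dvd_of_pow_dvd_pow hD0 (dvd_of_algebraMap_mul_dvd_mul hb hdvd)).mul_left _

theorem analyticAt_graph_of_aevalAeval_eq_zero (hG : ∀ᶠ x in 𝓝 (c, 0), ContinuousAt G x)
    {p : (AnalyticGerm c)[X][Y]} (hp : p ≠ 0)
    (hGp : ∀ {s : ℝ → ℝ} (hs : Tendsto s (𝓝[≠] c) (𝓝 0)),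
      aevalAeval (graphGerm hG.self_of_nhds hs) (BoundedGerm.ofTendsto hs) p = 0)
    (han : ∃ᶠ N : ℕ in atTop, AnalyticAt ℝ (fun t => G (t, (t - c) ^ N)) c) :
    AnalyticAt ℝ (fun t => G (t, 0)) c := by
  obtain ⟨T, hT0, hT⟩ :=
    exists_ne_zero_forall_dvd_aeval_of_aevalAeval_eq_zero (BoundedGerm (𝓝[≠] c)) hp
  have hTG : VanishesAlongGraphs hG.self_of_nhds T := fun s hs hs0 =>
    hT _ _ (BoundedGerm.mk_mem_nonZeroDivisors hs0) (hGp hs)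
  obtain ⟨x, hx⟩ := mem_range_algebraMap_of_isAlgebraic_of_approx
    (IsDiscreteValuationRing.not_isField _) AnalyticGerm.map_maximalIdeal_le_jacobson_bot
    ⟨T, hT0, hTG.aeval_eq_zero hG⟩
    fun a ha => hTG.exists_dvd_graphGerm_sub hG hT0 han ha
  obtain ⟨f, rfl⟩ := AnalyticGerm.mk_surjective x
  have hf : AnalyticAt ℝ (f : ℝ → ℝ) c := f.2
  have hcont : ContinuousAt (fun t => G (t, 0)) c :=
    hG.self_of_nhds.comp (f := fun t => (t, (0 : ℝ))) (Continuous.prodMk_left 0).continuousAt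
  exact hf.congr <| (hf.continuousAt.eventuallyEq_nhds_iff_eventuallyEq_nhdsNE hcont).1 <|
    Germ.coe_eq.1 (Subtype.ext_iff.1 hx)

end Graphs

/-! ### Polynomials along a family of lines -/

section Lines

variable {σ : Type*} [Fintype σ] {c : ℝ} {γ : ℝ → σ → ℝ}

/-- The restriction of polynomials to the lines `X ↦ γ t + X • v`, as a polynomial in `X` whose
coefficients are germs in `t`. -/
noncomputable def lineRestriction (hγ : AnalyticAt ℝ γ c) (v : σ → ℝ) :
    MvPolynomial σ ℝ →+* (AnalyticGerm c)[X] :=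
  MvPolynomial.eval₂Hom (C.comp (AnalyticGerm.const c)) fun i =>
    C (AnalyticGerm.mk c ⟨fun t => γ t i, analyticAt_pi_iff.1 hγ i⟩) +
      X * C (AnalyticGerm.const c (v i))

theorem aeval_lineRestriction (hγ : AnalyticAt ℝ γ c) (v : σ → ℝ)
    (s : boundedFunctions (𝓝[≠] c)) (q : MvPolynomial σ ℝ) :
    (aeval (BoundedGerm.mk _ s) (lineRestriction hγ v q) : Germ (𝓝[≠] c) ℝ) =
      (fun t => MvPolynomial.eval (γ t + (s : ℝ → ℝ) t • v) q : ℝ → ℝ) := by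
  suffices h : (BoundedGerm (𝓝[≠] c)).subtype.comp
      ((aeval (R := AnalyticGerm c) (BoundedGerm.mk _ s)).toRingHom.comp (lineRestriction hγ v)) =
      (Germ.coeRingHom _).comp
        (RingHom.pi fun t => MvPolynomial.eval (γ t + (s : ℝ → ℝ) t • v)) from
    RingHom.congr_fun h q
  refine MvPolynomial.ringHom_ext (fun a => ?_) fun i => ?_
  · simp only [RingHom.comp_apply, lineRestriction, MvPolynomial.coe_eval₂Hom,
      MvPolynomial.eval₂_C, AlgHom.toRingHom_eq_coe, RingHom.coe_coe, aeval_C]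
    exact congrArg Germ.ofFun (funext fun t => (MvPolynomial.eval_C a).symm)
  · simp only [RingHom.comp_apply, lineRestriction, MvPolynomial.coe_eval₂Hom,
      MvPolynomial.eval₂_X, AlgHom.toRingHom_eq_coe, RingHom.coe_coe, map_add, map_mul, aeval_C,
      aeval_X]
    exact congrArg Germ.ofFun (funext fun t =>
      (MvPolynomial.eval_X (f := γ t + (s : ℝ → ℝ) t • v) i).symm)

theorem lineRestriction_ne_zero (hγ : AnalyticAt ℝ γ c) {v : σ → ℝ} {q : MvPolynomial σ ℝ}
    (hq : MvPolynomial.eval (γ c + v) q ≠ 0) : lineRestriction hγ v q ≠ 0 := by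
  intro h
  have hzero : ∀ᶠ t in 𝓝[≠] c, MvPolynomial.eval (γ t + v) q = 0 := by
    have h1 := aeval_lineRestriction hγ v 1 q
    rw [h, map_zero] at h1
    filter_upwards [Germ.coe_eq.1 h1] with t ht
    simpa using ht.symm
  have hlim : Tendsto (fun t => MvPolynomial.eval (γ t + v) q) (𝓝[≠] c)
      (𝓝 (MvPolynomial.eval (γ c + v) q)) :=
    (((MvPolynomial.continuous_eval q).tendsto _).comp
      (hγ.continuousAt.tendsto.add_const v)).mono_left nhdsWithin_le_nhds
  exact hq (tendsto_nhds_unique (hlim.congr' hzero) tendsto_const_nhds)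

theorem eventually_atTop_eval_add_pow_ne_zero (hγ : AnalyticAt ℝ γ c) {v : σ → ℝ}
    {q : MvPolynomial σ ℝ} (hq : MvPolynomial.eval (γ c + v) q ≠ 0) :
    ∀ᶠ N : ℕ in atTop, ∀ᶠ t in 𝓝[≠] c, MvPolynomial.eval (γ t + (t - c) ^ N • v) q ≠ 0 := by
  have hinj : Function.Injective fun N : ℕ => AnalyticGerm.uniformizer c ^ N :=
    pow_injective_of_not_isUnit AnalyticGerm.prime_uniformizer.not_isUnit
      AnalyticGerm.prime_uniformizer.ne_zero
  have hroots : ∀ᶠ N : ℕ in atTop,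
      (lineRestriction hγ v q).eval (AnalyticGerm.uniformizer c ^ N) ≠ 0 := by
    rw [← Nat.cofinite_eq_atTop]
    exact hinj.tendsto_cofinite.eventually
      (finite_setOfPred_isRoot (lineRestriction_ne_zero hγ hq)).eventually_cofinite_notMem
  filter_upwards [hroots] with N hN
  obtain ⟨f, hf⟩ := AnalyticGerm.mk_surjective
    ((lineRestriction hγ v q).eval (AnalyticGerm.uniformizer c ^ N))
  have hfq : (f : ℝ → ℝ) =ᶠ[𝓝[≠] c] fun t => MvPolynomial.eval (γ t + (t - c) ^ N • v) q := by
    have h := congrArg (algebraMap (AnalyticGerm c) (BoundedGerm (𝓝[≠] c))) hf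
    rw [← aeval_algebraMap_apply_eq_algebraMap_eval] at h
    exact Germ.coe_eq.1 ((Subtype.ext_iff.1 h).trans
      (aeval_lineRestriction hγ v ⟨fun t => (t - c) ^ N, AnalyticGerm.isBigO_one_of_analyticAt <|
        (analyticAt_id.sub analyticAt_const).pow N⟩ q))
  filter_upwards [AnalyticGerm.eventually_ne_zero (hf ▸ hN), hfq] with t ht hft
  rwa [← hft]

theorem aevalAeval_map_lineRestriction_eq_zero (hγ : AnalyticAt ℝ γ c) (v : σ → ℝ)
    {F : (σ → ℝ) → ℝ} {P : (MvPolynomial σ ℝ)[X]}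
    (hP : ∀ x, P.eval₂ (MvPolynomial.eval x) (F x) = 0) {s u : boundedFunctions (𝓝[≠] c)}
    (hu : (u : ℝ → ℝ) = fun t => F (γ t + (s : ℝ → ℝ) t • v)) :
    aevalAeval (BoundedGerm.mk _ s) (BoundedGerm.mk _ u) (P.map (lineRestriction hγ v)) = 0 := by
  have hcomp : (BoundedGerm (𝓝[≠] c)).subtype.comp ((aeval (R := AnalyticGerm c)
      (BoundedGerm.mk _ s)).toRingHom.comp (lineRestriction hγ v)) =
      (Germ.coeRingHom _).comp (RingHom.pi fun t => MvPolynomial.eval (γ t + (s : ℝ → ℝ) t • v)) :=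
    RingHom.ext (aeval_lineRestriction hγ v s)
  have hpi : P.eval₂ (RingHom.pi fun t => MvPolynomial.eval (γ t + (s : ℝ → ℝ) t • v)) u = 0 := by
    funext t
    refine (hom_eval₂ P _ (Pi.evalRingHom (fun _ => ℝ) t) _).trans ?_
    rw [Pi.evalRingHom_apply, hu]
    exact hP _
  refine Subtype.ext ((congrArg (BoundedGerm _).subtype (aevalAeval_eq_eval₂ ..)).trans ?_)
  rw [eval₂_map, hom_eval₂]
  refine (congrArg (fun φ => P.eval₂ φ _) hcomp).trans ?_
  exact (hom_eval₂ P (RingHom.pi fun t => MvPolynomial.eval (γ t + (s : ℝ → ℝ) t • v))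
    (Germ.coeRingHom (𝓝[≠] c)) u).symm.trans (congrArg Germ.ofFun hpi)

theorem analyticAt_comp_of_forall_eval₂_eq_zero {F : (σ → ℝ) → ℝ} (hF : Continuous F)
    {P : (MvPolynomial σ ℝ)[X]} (hP : ∀ x, P.eval₂ (MvPolynomial.eval x) (F x) = 0)
    (hγ : AnalyticAt ℝ γ c) {v : σ → ℝ}
    (hv : MvPolynomial.eval (γ c + v) P.leadingCoeff ≠ 0)
    (han : ∃ᶠ N : ℕ in atTop, AnalyticAt ℝ (fun t => F (γ t + (t - c) ^ N • v)) c) :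
    AnalyticAt ℝ (fun t => F (γ t)) c := by
  have hG : ∀ᶠ x : ℝ × ℝ in 𝓝 (c, 0), ContinuousAt (fun x => F (γ x.1 + x.2 • v)) x := by
    filter_upwards [(continuous_fst.tendsto (c, (0 : ℝ))).eventually hγ.eventually_analyticAt]
      with x hx
    exact hF.continuousAt.comp <| (hx.continuousAt.comp continuousAt_fst).add
      (continuousAt_snd.smul continuousAt_const)
  have hp : Bivariate.swap (P.map (lineRestriction hγ v)) ≠ 0 := by
    rw [map_ne_zero_iff _ (AlgEquiv.injective _)]
    intro h
    refine lineRestriction_ne_zero hγ hv ?_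
    rw [leadingCoeff, ← coeff_map, h, coeff_zero]
  simpa using analyticAt_graph_of_aevalAeval_eq_zero hG hp (fun hs => by
    rw [Bivariate.aevalAeval_swap]
    exact aevalAeval_map_lineRestriction_eq_zero hγ v hP rfl) han

end Lines

/-! ### Semialgebraic functions -/

section Semialgebraic

theorem IsSemialgebraic.preimage {m n : ℕ} {S : Set (Fin n → ℝ)} (hS : IsSemialgebraic S)
    (φ : Fin n → MvPolynomial (Fin m) ℝ) :
    IsSemialgebraic {x | (fun i => MvPolynomial.eval x (φ i)) ∈ S} := by
  obtain ⟨k, p, r, q, rfl⟩ := hS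
  refine ⟨k, fun i => MvPolynomial.bind₁ φ (p i), r, fun i j => MvPolynomial.bind₁ φ (q i j), ?_⟩
  have heval (x : Fin m → ℝ) (p : MvPolynomial (Fin n) ℝ) :
      MvPolynomial.eval x (MvPolynomial.bind₁ φ p) =
        MvPolynomial.eval (fun i => MvPolynomial.eval x (φ i)) p :=
    MvPolynomial.eval₂Hom_bind₁ _ _ _ _
  ext x
  simp [heval]

theorem IsSemialgebraic.exists_ne_zero_forall_mem_eval_eq_zero {n : ℕ} {S : Set (Fin n → ℝ)}
    (hS : IsSemialgebraic S) (hint : interior S = ∅) :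
    ∃ P : MvPolynomial (Fin n) ℝ, P ≠ 0 ∧ ∀ x ∈ S, MvPolynomial.eval x P = 0 := by
  classical
  obtain ⟨k, p, r, q, rfl⟩ := hS
  refine ⟨∏ i with p i ≠ 0, p i, Finset.prod_ne_zero_iff.2 fun i hi => (Finset.mem_filter.1 hi).2,
    fun x hx => ?_⟩
  obtain ⟨i, hpi, hqi⟩ := Set.mem_iUnion.1 hx
  rw [map_prod]
  refine Finset.prod_eq_zero (Finset.mem_filter.2 ⟨Finset.mem_univ i, fun hp0 => ?_⟩) hpi
  have hopen : IsOpen {x | ∀ j, 0 < MvPolynomial.eval x (q i j)} := by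
    rw [Set.ofPred_forall]
    exact isOpen_iInter_of_finite fun j =>
      isOpen_lt continuous_const (MvPolynomial.continuous_eval _)
  exact hint.subset <| mem_interior.2
    ⟨_, fun y hy => Set.mem_iUnion.2 ⟨i, by simp [hp0], hy⟩, hopen, hqi⟩

theorem interior_graph_eq_empty {n : ℕ} (f : (Fin n → ℝ) → ℝ) :
    interior {v : Fin (n + 1) → ℝ | v (Fin.last n) = f (Fin.init v)} = ∅ := by
  refine Set.eq_empty_iff_forall_notMem.2 fun v hv => ?_
  have hsnoc : Continuous fun y : ℝ => (Fin.snoc (α := fun _ => ℝ) (Fin.init v) y) :=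
    continuous_const.finSnoc continuous_id
  have hmem : {f (Fin.init v)} ∈ 𝓝 (v (Fin.last n)) := by
    filter_upwards [hsnoc.continuousAt.preimage_mem_nhds
      ((Fin.snoc_init_self v).symm ▸ mem_interior_iff_mem_nhds.1 hv)] with y hy
    simpa using hy
  simpa using mem_interior_iff_mem_nhds.2 hmem

/-- A polynomial acts on functions by multiplication with its values. -/
noncomputable abbrev polynomialAlgebra (σ : Type*) : Algebra (MvPolynomial σ ℝ) ((σ → ℝ) → ℝ) :=
  (RingHom.pi fun x => MvPolynomial.eval x).toAlgebra

attribute [local instance] polynomialAlgebra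

theorem aeval_apply_eq_eval₂_eval {σ : Type*} (P : (MvPolynomial σ ℝ)[X]) (f : (σ → ℝ) → ℝ)
    (x : σ → ℝ) : aeval f P x = P.eval₂ (MvPolynomial.eval x) (f x) :=
  hom_eval₂ P _ (Pi.evalRingHom (fun _ => ℝ) x) f

theorem isAlgebraic_fun_inv {σ : Type*} {f : (σ → ℝ) → ℝ}
    (hf : IsAlgebraic (MvPolynomial σ ℝ) f) : IsAlgebraic (MvPolynomial σ ℝ) f⁻¹ := by
  obtain ⟨P, hP, hPf⟩ := hf
  refine ⟨X * P.reverse, mul_ne_zero X_ne_zero (by simpa using hP), funext fun x => ?_⟩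
  rw [map_mul, aeval_X, Pi.mul_apply, Pi.inv_apply, aeval_apply_eq_eval₂_eval,
    Pi.zero_apply, Pi.inv_apply]
  by_cases hx : f x = 0
  · rw [hx, inv_zero, zero_mul]
  · let := invertibleOfNonzero hx
    rw [← invOf_eq_inv, (eval₂_reverse_eq_zero_iff _ _ _).2, mul_zero]
    rw [← aeval_apply_eq_eval₂_eval, hPf, Pi.zero_apply]

theorem isAlgebraic_fun_div {σ : Type*} {f g : (σ → ℝ) → ℝ}
    (hf : IsAlgebraic (MvPolynomial σ ℝ) f) (hg : IsAlgebraic (MvPolynomial σ ℝ) g) :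
    IsAlgebraic (MvPolynomial σ ℝ) (f / g) :=
  div_eq_mul_inv f g ▸ hf.mul (isAlgebraic_fun_inv hg)

theorem exists_ne_zero_forall_eval₂_eval_eq_zero_of_eqOn_dense {σ : Type*} {F k : (σ → ℝ) → ℝ}
    (hk : IsAlgebraic (MvPolynomial σ ℝ) k) (hF : Continuous F) {s : Set (σ → ℝ)} (hs : Dense s)
    (hFk : s.EqOn F k) :
    ∃ P : (MvPolynomial σ ℝ)[X], P ≠ 0 ∧ ∀ x, P.eval₂ (MvPolynomial.eval x) (F x) = 0 := by
  obtain ⟨P, hP, hPk⟩ := hk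
  have hcont : Continuous fun x => P.eval₂ (MvPolynomial.eval x) (F x) := by
    simp only [eval₂_eq_sum_range]
    exact continuous_finsetSum _ fun j _ => (MvPolynomial.continuous_eval _).mul (hF.pow j)
  refine ⟨P, hP, congrFun <| hcont.ext_on hs continuous_zero fun x hx => ?_⟩
  simp only [hFk hx, ← aeval_apply_eq_eval₂_eval, hPk, Pi.zero_apply]

theorem IsSemialgebraicFun.isAlgebraic {n : ℕ} {f : (Fin n → ℝ) → ℝ}
    (hf : IsSemialgebraicFun f) : IsAlgebraic (MvPolynomial (Fin n) ℝ) f := by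
  obtain ⟨P, hP, hPf⟩ := hf.exists_ne_zero_forall_mem_eval_eq_zero (interior_graph_eq_empty f)
  refine ⟨MvPolynomial.optionEquivLeft ℝ (Fin n) (MvPolynomial.rename finSuccEquivLast P),
    ?_, funext fun x => ?_⟩
  · rwa [map_ne_zero_iff _ (AlgEquiv.injective _), map_ne_zero_iff _
      (MvPolynomial.rename_injective _ finSuccEquivLast.injective)]
  · have hgraph : (fun o : Option (Fin n) => o.elim (f x) x) ∘ finSuccEquivLast =
        Fin.snoc (α := fun _ => ℝ) x (f x) :=
      funext fun i => Fin.lastCases (by simp) (by simp) i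
    rw [aeval_apply_eq_eval₂_eval, ← eval_map, ← MvPolynomial.optionEquivLeft_elim_eval,
      MvPolynomial.eval_rename, hgraph]
    exact hPf _ (by simp)

theorem IsSemialgebraicFun.exists_ne_zero_forall_eval_ne_zero {n : ℕ} {g : (Fin n → ℝ) → ℝ}
    (hg : IsSemialgebraicFun g) (hint : interior {x | g x = 0} = ∅) :
    ∃ h : MvPolynomial (Fin n) ℝ, h ≠ 0 ∧ ∀ x, MvPolynomial.eval x h ≠ 0 → g x ≠ 0 := by
  have hzero := hg.preimage (Fin.snoc (α := fun _ => MvPolynomial (Fin n) ℝ) MvPolynomial.X 0)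
  have hset : {x | g x = 0} = {x | (fun i => MvPolynomial.eval x
      (Fin.snoc (α := fun _ => MvPolynomial (Fin n) ℝ) MvPolynomial.X 0 i)) ∈
        {v : Fin (n + 1) → ℝ | v (Fin.last n) = g (Fin.init v)}} := by
    ext x
    simp [Fin.init_def, eq_comm]
  rw [← hset] at hzero
  obtain ⟨h, hh, hhg⟩ := hzero.exists_ne_zero_forall_mem_eval_eq_zero hint
  exact ⟨h, hh, fun x hx hgx => hx (hhg x hgx)⟩

end Semialgebraic

theorem ArcAnalytic.analyticAt_add_pow_smul {E : Type*} [NormedAddCommGroup E] [NormedSpace ℝ E]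
    {f : E → ℝ} (hf : ArcAnalytic f) {γ : ℝ → E} (hγ : AnalyticOnNhd ℝ γ (Set.Ioo (-1) 1)) {c : ℝ}
    (hc : c ∈ Set.Ioo (-1) 1) (v : E) (N : ℕ) :
    AnalyticAt ℝ (fun t => f (γ t + (t - c) ^ N • v)) c :=
  hf (fun t => γ t + (t - c) ^ N • v) (fun t ht => (hγ t ht).add <|
    ((analyticAt_id.sub analyticAt_const).pow N).smul analyticAt_const) c hc

/-- If `f, g : ℝⁿ → ℝ` (`n ≥ 1`) are semialgebraic arc-analytic functions, the zero locus of
`g` is nowhere dense, and `f/g` extends to a continuous function `F` on `ℝⁿ`, then `F` is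
arc-analytic. -/
theorem arcAnalytic_of_continuous_quotient {n : ℕ} (hn : 1 ≤ n)
    (f g : (Fin n → ℝ) → ℝ)
    (hf_sa : IsSemialgebraicFun f) (hg_sa : IsSemialgebraicFun g)
    (hf_aa : ArcAnalytic f) (hg_aa : ArcAnalytic g)
    (hg_nd : IsNowhereDense {x | g x = 0})
    (F : (Fin n → ℝ) → ℝ) (hF : Continuous F)
    (hFfg : ∀ x, g x ≠ 0 → F x = f x / g x) :
    ArcAnalytic F := by
  have hint : interior {x | g x = 0} = ∅ :=
    Set.subset_empty_iff.1 ((interior_mono subset_closure).trans hg_nd.subset)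
  obtain ⟨h, hh, hhg⟩ := hg_sa.exists_ne_zero_forall_eval_ne_zero hint
  obtain ⟨P, hP, hPF⟩ := exists_ne_zero_forall_eval₂_eval_eq_zero_of_eqOn_dense
    (isAlgebraic_fun_div hf_sa.isAlgebraic hg_sa.isAlgebraic) hF
    (interior_eq_empty_iff_dense_compl.1 hint) hFfg
  obtain ⟨w, hw⟩ := not_forall.1 <|
    mt (MvPolynomial.funext (q := 0)) (mul_ne_zero hh (leadingCoeff_ne_zero.2 hP))
  rw [map_mul, map_zero, mul_eq_zero, not_or] at hw
  intro γ hγ c hc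
  have hcw : γ c + (w - γ c) = w := add_sub_cancel _ _
  refine analyticAt_comp_of_forall_eval₂_eq_zero hF hPF (hγ c hc) (v := w - γ c)
    (hcw.symm ▸ hw.2) (Eventually.frequently ?_)
  filter_upwards [eventually_atTop_eval_add_pow_ne_zero (hγ c hc) (hcw.symm ▸ hw.1)] with N hN
  have hmero := (hf_aa.analyticAt_add_pow_smul hγ hc (w - γ c) N).meromorphicAt.div
    (hg_aa.analyticAt_add_pow_smul hγ hc (w - γ c) N).meromorphicAt
  refine (hmero.congr (hN.mono fun t ht => (hFfg _ (hhg _ ht)).symm)).analyticAt ?_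
  exact hF.continuousAt.comp <| (hγ c hc).continuousAt.add <| by fun_prop
end

section
/- The graph of the function f : ℝ² → ℝ, f(x,y) = √(x⁴ + y⁴), regarded as a subset of ℝ³, does not belong to the Boolean algebra of subsets of ℝ³ generated by the zero sets of Nash functions on ℝ³ (i.e., the graph of f is not Nash constructible in ℝ³). -/
/-- A *Nash function* on `ℝⁿ` is a real-analytic function `ℝⁿ → ℝ` whose graph is a
semialgebraic subset of `ℝⁿ⁺¹`. -/
def IsNashFunction {n : ℕ} (f : (Fin n → ℝ) → ℝ) : Prop :=
  AnalyticOnNhd ℝ f Set.univ ∧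
    IsSemialgebraic {v : Fin (n + 1) → ℝ | v (Fin.last n) = f (Fin.init v)}

/-- The *Nash constructible* subsets of `ℝⁿ`: the Boolean algebra of sets generated by the
zero sets of Nash functions on `ℝⁿ`, i.e. the smallest collection containing all Nash sets
and closed under finite unions, finite intersections, and complements. -/
inductive IsNashConstructible {n : ℕ} : Set (Fin n → ℝ) → Prop
  | nash (f : (Fin n → ℝ) → ℝ) (hf : IsNashFunction f) :
      IsNashConstructible {x | f x = 0}
  | union (S T : Set (Fin n → ℝ)) :
      IsNashConstructible S → IsNashConstructible T → IsNashConstructible (S ∪ T)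
  | inter (S T : Set (Fin n → ℝ)) :
      IsNashConstructible S → IsNashConstructible T → IsNashConstructible (S ∩ T)
  | compl (S : Set (Fin n → ℝ)) :
      IsNashConstructible S → IsNashConstructible Sᶜ

/-!
On the arc `x ↦ (x, t x, w x²)` with `w² = 1 + t⁴`, the Taylor coefficients of an analytic function
are polynomials in `t` and `w`, that is, regular functions on the irreducible affine curve
`w² = 1 + t⁴`. A nonzero regular function has finitely many zeros, so an analytic function vanishing
along infinitely many of these arcs vanishes along all of them. Hence every set in the Boolean
algebra generated by the zero sets contains the germs of all but finitely many arcs, or avoids the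
germs of all but finitely many. The graph does neither: it contains the arcs from the component
`w > 0` of the real curve and misses those from the component `w < 0`.
-/

open Polynomial Filter Topology Asymptotics

section FilterDecided

variable {α : Type*}

/-- The Boolean algebra of the sets `S` decided by a filter `l`: either `S` or its complement
belongs to `l`. -/
def decidedSets (l : Filter α) : BooleanSubalgebra (Set α) where
  carrier := {S | S ∈ l ∨ Sᶜ ∈ l}
  supClosed' := by
    rintro S (hS | hS) T (hT | hT)
    · exact .inl (mem_of_superset hS le_sup_left)
    · exact .inl (mem_of_superset hS le_sup_left)
    · exact .inl (mem_of_superset hT le_sup_right)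
    · exact .inr (by simpa only [Set.sup_eq_union, Set.compl_union] using inter_mem hS hT)
  infClosed' := by
    rintro S (hS | hS) T (hT | hT)
    · exact .inl (inter_mem hS hT)
    · exact .inr (mem_of_superset hT (compl_le_compl inf_le_right))
    · exact .inr (mem_of_superset hS (compl_le_compl inf_le_left))
    · exact .inr (mem_of_superset hT (compl_le_compl inf_le_right))
  compl_mem' := fun {S} hS => by simpa only [Set.mem_ofPred_eq, compl_compl] using hS.symm
  bot_mem' := .inr (by simp only [Set.bot_eq_empty, Set.compl_empty, univ_mem])

theorem mem_decidedSets {l : Filter α} {S : Set α} : S ∈ decidedSets l ↔ S ∈ l ∨ Sᶜ ∈ l :=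
  Iff.rfl

end FilterDecided

section OrderOfVanishing

variable {𝕜 : Type*} [NontriviallyNormedField 𝕜]

theorem natCast_le_analyticOrderAt_of_isBigO {E : Type*} [NormedAddCommGroup E] [NormedSpace 𝕜 E]
    {f : 𝕜 → E} {z₀ : 𝕜} (hf : AnalyticAt 𝕜 f z₀) {n : ℕ}
    (h : f =O[𝓝 z₀] fun z => (z - z₀) ^ n) : n ≤ analyticOrderAt f z₀ := by
  by_contra! hlt
  obtain ⟨m, hm⟩ := ENat.ne_top_iff_exists.1 hlt.ne_top
  rw [← hm, Nat.cast_lt] at hlt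
  obtain ⟨g, hg, hg₀, hfg⟩ := hf.analyticOrderAt_eq_natCast.1 hm.symm
  have hf_mul : (fun z => (z - z₀) ^ m • g z) =O[𝓝[≠] z₀]
      fun z => (z - z₀) ^ m • (z - z₀) ^ (n - m) := by
    simp only [smul_eq_mul, ← pow_add, Nat.add_sub_cancel' hlt.le]
    exact (h.congr' hfg .rfl).mono nhdsWithin_le_nhds
  have hg_bigO : g =O[𝓝[≠] z₀] fun z => (z - z₀) ^ (n - m) := by
    have hinv := (isBigO_refl (fun z : 𝕜 => ((z - z₀) ^ m)⁻¹) (𝓝[≠] z₀)).smul hf_mul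
    refine hinv.congr' ?_ ?_ <;> filter_upwards [self_mem_nhdsWithin] with z hz <;>
      exact inv_smul_smul₀ (pow_ne_zero m (sub_ne_zero.2 hz)) _
  have hpow : Tendsto (fun z => (z - z₀) ^ (n - m)) (𝓝[≠] z₀) (𝓝 0) := by
    have hcont : ContinuousAt (fun z => (z - z₀) ^ (n - m)) z₀ := by fun_prop
    simpa [(Nat.sub_pos_of_lt hlt).ne'] using hcont.continuousWithinAt.tendsto
  exact hg₀ (tendsto_nhds_unique hg.continuousAt.continuousWithinAt.tendsto
    (hg_bigO.trans_tendsto hpow))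

theorem analyticOrderAt_polynomial_eval {p : 𝕜[X]} (hp : p ≠ 0) (a : 𝕜) :
    analyticOrderAt (fun x => p.eval x) a = p.rootMultiplicity a := by
  obtain ⟨q, hpq, hq⟩ := exists_eq_pow_rootMultiplicity_mul_and_not_dvd p hp a
  refine (AnalyticOnNhd.eval_polynomial p a trivial).analyticOrderAt_eq_natCast.2
    ⟨fun x => q.eval x, AnalyticOnNhd.eval_polynomial q a trivial,
      fun h => hq (dvd_iff_isRoot.2 h), .of_forall fun x => ?_⟩
  conv_lhs => rw [hpq]
  simp only [eval_mul, eval_pow, eval_sub, eval_X, eval_C, smul_eq_mul]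

theorem natCast_le_analyticOrderAt_polynomial_eval {p : 𝕜[X]} {n : ℕ} :
    n ≤ analyticOrderAt (fun x => p.eval x) 0 ↔ X ^ n ∣ p := by
  rcases eq_or_ne p 0 with rfl | hp
  · simp [analyticOrderAt_eq_top.2]
  · rw [analyticOrderAt_polynomial_eval hp, Nat.cast_le, le_rootMultiplicity_iff hp, C_0, sub_zero]

end OrderOfVanishing

/-- The Boolean algebra generated by the zero sets of the functions on `𝕜^ι` that are analytic
at the origin, though not necessarily elsewhere. -/
def analyticGermConstructible (𝕜 ι : Type*) [NontriviallyNormedField 𝕜] [Fintype ι] :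
    BooleanSubalgebra (Set (ι → 𝕜)) :=
  BooleanSubalgebra.closure {Z | ∃ f : (ι → 𝕜) → 𝕜, AnalyticAt 𝕜 f 0 ∧ Z = {y | f y = 0}}

section AlgebraicArcs

variable {𝕜 ι R : Type*}

theorem exists_mvPolynomial_eval_eq_partialSum [NontriviallyNormedField 𝕜]
    [Finite ι] (p : FormalMultilinearSeries 𝕜 (ι → 𝕜) 𝕜) (n : ℕ) :
    ∃ Q : MvPolynomial ι 𝕜, ∀ y, MvPolynomial.eval y Q = p.partialSum n y := by
  classical
  have := Fintype.ofFinite ι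
  refine ⟨∑ k ∈ Finset.range n, ∑ r : Fin k → ι,
    (∏ i, MvPolynomial.X (r i)) * MvPolynomial.C (p k fun i => Pi.single (r i) 1), fun y => ?_⟩
  simp only [FormalMultilinearSeries.partialSum, map_sum, map_mul, map_prod, MvPolynomial.eval_X,
    MvPolynomial.eval_C]
  refine Finset.sum_congr rfl fun k _ => ?_
  have hy : (fun _ : Fin k => y) = fun _ => ∑ j, y j • (Pi.single j 1 : ι → 𝕜) :=
    funext fun _ => pi_eq_sum_univ' y
  simp only [hy, ContinuousMultilinearMap.map_sum, ContinuousMultilinearMap.map_smul_univ,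
    smul_eq_mul]

theorem finite_setOf_algHom_apply_eq_zero [Field 𝕜] [CommRing R] [Algebra 𝕜 R]
    [IsNoetherianRing R] [Ring.DimensionLEOne R] {a : R} (ha : a ≠ 0) :
    {θ : R →ₐ[𝕜] 𝕜 | θ a = 0}.Finite := by
  have hker_inj : Function.Injective fun θ : R →ₐ[𝕜] 𝕜 => RingHom.ker θ := by
    intro θ θ' h
    ext r
    have hr : r - algebraMap 𝕜 R (θ r) ∈ RingHom.ker θ := by simp [RingHom.mem_ker]
    have hr' : r - algebraMap 𝕜 R (θ r) ∈ RingHom.ker θ' := h.le hr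
    simpa [RingHom.mem_ker, sub_eq_zero, eq_comm (a := θ r)] using hr'
  refine ((Ideal.finite_minimalPrimes_of_isNoetherianRing R (Ideal.span {a})).preimage
    hker_inj.injOn).subset fun θ hθ => ?_
  have hker : (RingHom.ker θ).IsPrime := RingHom.ker_isPrime θ
  refine ⟨⟨hker, (Ideal.span_singleton_le_iff_mem _).2 hθ⟩, fun q hq hqθ => ?_⟩
  have hq_ne_bot : q ≠ ⊥ := fun h =>
    ha (by simpa [h] using (Ideal.span_singleton_le_iff_mem _).1 hq.2)
  exact ((hq.1.isMaximal hq_ne_bot).eq_of_le hker.ne_top hqθ).ge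

variable [NontriviallyNormedField 𝕜] [CommRing R] [Algebra 𝕜 R] {γ : ι → R[X]}

/-- The polynomial arc in `𝕜^ι` cut out at the `𝕜`-point `θ` of `Spec R` by the family of arcs `γ`,
whose coefficients are regular functions on `Spec R`. -/
noncomputable def arc (γ : ι → R[X]) (θ : R →ₐ[𝕜] 𝕜) (x : 𝕜) : ι → 𝕜 :=
  fun i => (mapAlgHom θ (γ i)).eval x

theorem arc_zero (hγ : ∀ i, (γ i).coeff 0 = 0) (θ : R →ₐ[𝕜] 𝕜) : arc γ θ 0 = 0 := by
  ext i
  simp [arc, ← coeff_zero_eq_eval_zero, hγ]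

theorem mvPolynomial_eval_arc (Q : MvPolynomial ι 𝕜) (θ : R →ₐ[𝕜] 𝕜) (x : 𝕜) :
    MvPolynomial.eval (arc γ θ x) Q = (mapAlgHom θ (MvPolynomial.aeval γ Q)).eval x := by
  have h := MvPolynomial.comp_aeval_apply γ ((aeval (R := 𝕜) x).comp (mapAlgHom θ)) Q
  simp only [AlgHom.comp_apply, coe_aeval_eq_eval] at h
  rw [h, ← MvPolynomial.coe_aeval_eq_eval]
  rfl

variable (𝕜) in
/-- The filter of the sets containing the punctured germ at `0` of all but finitely many arcs of the
family `γ`. -/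
noncomputable def genericArcs (γ : ι → R[X]) : Filter (ι → 𝕜) :=
  (cofinite : Filter (R →ₐ[𝕜] 𝕜)).bind fun θ => (𝓝[≠] 0).map (arc γ θ)

theorem mem_genericArcs {S : Set (ι → 𝕜)} :
    S ∈ genericArcs 𝕜 γ ↔
      ∀ᶠ θ : R →ₐ[𝕜] 𝕜 in cofinite, ∀ᶠ x in 𝓝[≠] (0 : 𝕜), arc γ θ x ∈ S :=
  mem_bind'

theorem exists_arc_mem_of_mem_genericArcs {S : Set (ι → 𝕜)} (hS : S ∈ genericArcs 𝕜 γ)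
    {τ : Type*} [Infinite τ] {θ : τ → R →ₐ[𝕜] 𝕜} (hθ : Function.Injective θ) :
    ∃ t, ∃ x ≠ 0, arc γ (θ t) x ∈ S := by
  obtain ⟨t, ht⟩ := (hθ.tendsto_cofinite.eventually (mem_genericArcs.1 hS)).exists
  obtain ⟨x, hx, hx₀⟩ := (ht.and self_mem_nhdsWithin).exists
  exact ⟨t, x, hx₀, hx⟩

variable [Fintype ι]

theorem analyticAt_arc (θ : R →ₐ[𝕜] 𝕜) (x : 𝕜) : AnalyticAt 𝕜 (arc γ θ) x :=
  analyticAt_pi_iff.2 fun _ => AnalyticOnNhd.eval_polynomial _ x trivial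

theorem analyticAt_comp_arc {f : (ι → 𝕜) → 𝕜} (hf : AnalyticAt 𝕜 f 0)
    (hγ : ∀ i, (γ i).coeff 0 = 0) (θ : R →ₐ[𝕜] 𝕜) : AnalyticAt 𝕜 (fun x => f (arc γ θ x)) 0 :=
  AnalyticAt.fun_comp (by rwa [arc_zero hγ]) (analyticAt_arc θ 0)

theorem exists_le_analyticOrderAt_comp_arc_sub {f : (ι → 𝕜) → 𝕜} (hf : AnalyticAt 𝕜 f 0)
    (hγ : ∀ i, (γ i).coeff 0 = 0) (n : ℕ) :
    ∃ P : R[X], ∀ θ : R →ₐ[𝕜] 𝕜,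
      n ≤ analyticOrderAt (fun x => f (arc γ θ x) - (mapAlgHom θ P).eval x) 0 := by
  obtain ⟨p, hp⟩ := id hf
  obtain ⟨Q, hQ⟩ := exists_mvPolynomial_eval_eq_partialSum p n
  refine ⟨MvPolynomial.aeval γ Q, fun θ => ?_⟩
  simp only [← mvPolynomial_eval_arc]
  refine natCast_le_analyticOrderAt_of_isBigO ?_ ?_
  · simp only [mvPolynomial_eval_arc]
    exact (analyticAt_comp_arc hf hγ θ).sub (AnalyticOnNhd.eval_polynomial _ 0 trivial)
  · have harc : arc γ θ =O[𝓝 0] fun x => x := by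
      simpa [arc_zero hγ] using (analyticAt_arc (γ := γ) θ 0).differentiableAt.isBigO_sub
    have htendsto : Tendsto (arc γ θ) (𝓝 0) (𝓝 0) := by
      simpa [arc_zero hγ] using (analyticAt_arc (γ := γ) θ 0).continuousAt.tendsto
    have htaylor := (hp.isBigO_sub_partialSum_pow n).comp_tendsto htendsto
    simpa only [Function.comp_def, zero_add, hQ, sub_zero] using
      htaylor.trans (harc.norm_left.pow n)

variable [IsNoetherianRing R] [Ring.DimensionLEOne R]

theorem forall_eventually_comp_arc_eq_zero_of_infinite {f : (ι → 𝕜) → 𝕜} (hf : AnalyticAt 𝕜 f 0)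
    (hγ : ∀ i, (γ i).coeff 0 = 0)
    (hinf : {θ : R →ₐ[𝕜] 𝕜 | ∀ᶠ x in 𝓝 0, f (arc γ θ x) = 0}.Infinite) (θ : R →ₐ[𝕜] 𝕜) :
    ∀ᶠ x in 𝓝 0, f (arc γ θ x) = 0 := by
  refine analyticOrderAt_eq_top.1 (ENat.eq_top_iff_forall_ge.2 fun n => ?_)
  obtain ⟨P, hP⟩ := exists_le_analyticOrderAt_comp_arc_sub hf hγ n
  have hdvd : X ^ n ∣ P := by
    refine X_pow_dvd_iff.2 fun k hk => by_contra fun hne => hinf ?_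
    refine (finite_setOf_algHom_apply_eq_zero hne).subset fun θ' hθ' => ?_
    have hθ'P : X ^ n ∣ mapAlgHom θ' P := by
      rw [← natCast_le_analyticOrderAt_polynomial_eval, ← analyticOrderAt_neg]
      refine (hP θ').trans_eq (analyticOrderAt_congr ?_)
      filter_upwards [hθ'] with x hx
      simp [hx]
    simpa using X_pow_dvd_iff.1 hθ'P k hk
  have hθP : n ≤ analyticOrderAt (fun x => (mapAlgHom θ P).eval x) 0 :=
    natCast_le_analyticOrderAt_polynomial_eval.2 (by simpa using map_dvd (mapAlgHom θ) hdvd)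
  calc (n : ℕ∞)
      ≤ analyticOrderAt ((fun x => f (arc γ θ x) - (mapAlgHom θ P).eval x) +
          fun x => (mapAlgHom θ P).eval x) 0 := (le_min (hP θ) hθP).trans le_analyticOrderAt_add
    _ = analyticOrderAt (fun x => f (arc γ θ x)) 0 := by
        congr 1
        exact sub_add_cancel (fun x => f (arc γ θ x)) _

theorem setOf_eq_zero_mem_decidedSets_genericArcs {f : (ι → 𝕜) → 𝕜} (hf : AnalyticAt 𝕜 f 0)
    (hγ : ∀ i, (γ i).coeff 0 = 0) : {y | f y = 0} ∈ decidedSets (genericArcs 𝕜 γ) := by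
  simp only [mem_decidedSets, mem_genericArcs, Set.mem_compl_iff, Set.mem_ofPred_eq]
  rcases {θ : R →ₐ[𝕜] 𝕜 | ∀ᶠ x in 𝓝 0, f (arc γ θ x) = 0}.finite_or_infinite with hfin | hinf
  · right
    filter_upwards [hfin.compl_mem_cofinite] with θ hθ
    exact (analyticAt_comp_arc hf hγ θ).eventually_eq_zero_or_eventually_ne_zero.resolve_left hθ
  · exact .inl (.of_forall fun θ =>
      (forall_eventually_comp_arc_eq_zero_of_infinite hf hγ hinf θ).filter_mono nhdsWithin_le_nhds)

theorem analyticGermConstructible_le_decidedSets (hγ : ∀ i, (γ i).coeff 0 = 0) :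
    analyticGermConstructible 𝕜 ι ≤ decidedSets (genericArcs 𝕜 γ) := by
  refine BooleanSubalgebra.closure_le.2 ?_
  rintro _ ⟨f, hf, rfl⟩
  exact setOf_eq_zero_mem_decidedSets_genericArcs hf hγ

end AlgebraicArcs

theorem IsNashConstructible.mem_analyticGermConstructible {n : ℕ} {S : Set (Fin n → ℝ)}
    (hS : IsNashConstructible S) : S ∈ analyticGermConstructible ℝ (Fin n) := by
  induction hS with
  | nash f hf => exact BooleanSubalgebra.subset_closure ⟨f, hf.1 0 trivial, rfl⟩
  | union S T _ _ hS hT => exact BooleanSubalgebra.sup_mem hS hT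
  | inter S T _ _ hS hT => exact BooleanSubalgebra.inf_mem hS hT
  | compl S _ hS => exact BooleanSubalgebra.compl_mem hS

/-- The coordinate ring `𝕜[t, w] / (w² - h(t))` of the affine hyperelliptic curve `w² = h(t)`. -/
abbrev HyperellipticRing {𝕜 : Type*} [CommRing 𝕜] (h : 𝕜[X]) : Type _ :=
  AdjoinRoot (X ^ 2 - C h : 𝕜[X][X])

namespace HyperellipticRing

variable {𝕜 : Type*} [Field 𝕜] {h : 𝕜[X]}

theorem isDomain (hh : ¬ IsSquare h) : IsDomain (HyperellipticRing h) := by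
  refine AdjoinRoot.isDomain_of_prime (Irreducible.prime ?_)
  have hmonic : (X ^ 2 - C h : 𝕜[X][X]).Monic := monic_X_pow_sub_C h two_ne_zero
  have hdeg : (X ^ 2 - C h : 𝕜[X][X]).natDegree = 2 := natDegree_X_pow_sub_C
  rw [hmonic.irreducible_iff_roots_eq_zero_of_degree_le_three (by lia) (by lia),
    Multiset.eq_zero_iff_forall_notMem]
  intro c hc
  have hroot : c ^ 2 - h = 0 := by simpa using isRoot_of_mem_roots hc
  exact hh ⟨c, by rw [← sq, sub_eq_zero.1 hroot]⟩

theorem dimensionLEOne (hh : ¬ IsSquare h) : Ring.DimensionLEOne (HyperellipticRing h) :=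
  have := isDomain hh
  have : Module.Finite 𝕜[X] (HyperellipticRing h) :=
    (monic_X_pow_sub_C h two_ne_zero).finite_adjoinRoot
  .of_isIntegral 𝕜[X] _

/-- The `𝕜`-point `(t, w)` of the curve `w² = h(t)`. -/
noncomputable def point (t w : 𝕜) (hw : w ^ 2 = h.eval t) : HyperellipticRing h →ₐ[𝕜] 𝕜 :=
  AdjoinRoot.liftAlgHom _ (aeval t) w (by simp [hw])

variable {t w : 𝕜} (hw : w ^ 2 = h.eval t)

@[simp]
theorem point_of (p : 𝕜[X]) : point t w hw (AdjoinRoot.of _ p) = p.eval t := by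
  simp [point, coe_aeval_eq_eval]

@[simp]
theorem point_root : point t w hw (AdjoinRoot.root _) = w := by
  simp [point]

theorem point_injective {w : 𝕜 → 𝕜} (hw : ∀ t, w t ^ 2 = h.eval t) :
    Function.Injective fun t => point t (w t) (hw t) := fun t t' htt' => by
  simpa using DFunLike.congr_fun htt' (AdjoinRoot.of _ X)

end HyperellipticRing

/-- The family of arcs `x ↦ (x, t x, w x²)` parametrized by the curve `w² = h(t)`. -/
noncomputable def parabolicArcs {𝕜 : Type*} [CommRing 𝕜] (h : 𝕜[X]) :
    Fin 3 → (HyperellipticRing h)[X] :=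
  ![X, C (AdjoinRoot.of _ X) * X, C (AdjoinRoot.root _) * X ^ 2]

theorem coeff_zero_parabolicArcs {𝕜 : Type*} [CommRing 𝕜] (h : 𝕜[X]) (i : Fin 3) :
    (parabolicArcs h i).coeff 0 = 0 := by
  fin_cases i <;> simp [parabolicArcs]

theorem arc_parabolicArcs_point {𝕜 : Type*} [NontriviallyNormedField 𝕜] {h : 𝕜[X]} {t w : 𝕜}
    (hw : w ^ 2 = h.eval t) (x : 𝕜) :
    arc (parabolicArcs h) (HyperellipticRing.point t w hw) x = ![x, t * x, w * x ^ 2] := by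
  ext i
  fin_cases i <;> simp [arc, parabolicArcs]

theorem not_isSquare_one_add_X_pow_four : ¬ IsSquare (1 + X ^ 4 : ℝ[X]) := by
  rintro ⟨c, hc⟩
  have hc' : (X ^ 4 - C (-1) : ℝ[X]) = c * c := by rw [← hc, C_neg, C_1]; ring
  have hsep : (X ^ 4 - C (-1) : ℝ[X]).Separable :=
    separable_X_pow_sub_C _ (by norm_num) (by norm_num)
  have hunit : IsUnit c := hsep.squarefree c (dvd_of_eq hc'.symm)
  have hdeg : (c * c).natDegree = 4 := by rw [← hc', natDegree_X_pow_sub_C]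
  simp [natDegree_eq_zero_of_isUnit (hunit.mul hunit)] at hdeg

theorem arc_mem_graph_sqrt_iff {t w x : ℝ} (hw : w ^ 2 = (1 + X ^ 4 : ℝ[X]).eval t) (hx : x ≠ 0) :
    arc (parabolicArcs (1 + X ^ 4)) (HyperellipticRing.point t w hw) x ∈
      {v : Fin 3 → ℝ | v 2 = √(v 0 ^ 4 + v 1 ^ 4)} ↔ 0 ≤ w := by
  have hw' : w ^ 2 = 1 + t ^ 4 := by simpa using hw
  have hsq : x ^ 4 + (t * x) ^ 4 = (w * x ^ 2) ^ 2 := by linear_combination -(x ^ 4) * hw'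
  rw [arc_parabolicArcs_point]
  change w * x ^ 2 = √(x ^ 4 + (t * x) ^ 4) ↔ 0 ≤ w
  rw [hsq, Real.sqrt_sq_eq_abs, eq_comm, abs_eq_self, mul_nonneg_iff_of_pos_right (by positivity)]

theorem graph_sqrt_not_nashConstructible_general :
    {v : Fin 3 → ℝ | v 2 = √(v 0 ^ 4 + v 1 ^ 4)} ∉ analyticGermConstructible ℝ (Fin 3) := by
  intro hgraph
  have := HyperellipticRing.dimensionLEOne not_isSquare_one_add_X_pow_four
  have hsqrt_pos (t : ℝ) : 0 < √(1 + t ^ 4) := Real.sqrt_pos.2 (by positivity)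
  have hupper (t : ℝ) : √(1 + t ^ 4) ^ 2 = (1 + X ^ 4 : ℝ[X]).eval t := by
    rw [Real.sq_sqrt (by positivity)]
    simp
  have hlower (t : ℝ) : (-√(1 + t ^ 4)) ^ 2 = (1 + X ^ 4 : ℝ[X]).eval t := by
    rw [neg_sq, hupper]
  rcases analyticGermConstructible_le_decidedSets
    (coeff_zero_parabolicArcs (1 + X ^ 4 : ℝ[X])) hgraph with hmem | hmem
  · obtain ⟨t, x, hx, hv⟩ :=
      exists_arc_mem_of_mem_genericArcs hmem (HyperellipticRing.point_injective hlower)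
    linarith [hsqrt_pos t, (arc_mem_graph_sqrt_iff (hlower t) hx).1 hv]
  · obtain ⟨t, x, hx, hv⟩ :=
      exists_arc_mem_of_mem_genericArcs hmem (HyperellipticRing.point_injective hupper)
    exact hv ((arc_mem_graph_sqrt_iff (hupper t) hx).2 (hsqrt_pos t).le)

/-- The graph of `f(x, y) = √(x⁴ + y⁴)`, regarded as a subset of `ℝ³`, is not Nash
constructible in `ℝ³`. -/
theorem graph_sqrt_not_nashConstructible :
    ¬ IsNashConstructible {v : Fin 3 → ℝ | v 2 = Real.sqrt ((v 0) ^ 4 + (v 1) ^ 4)} :=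
  fun h => graph_sqrt_not_nashConstructible_general h.mem_analyticGermConstructible
end
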